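/- arXiv:2004.12518 — 5 statements merged into one kernel-verified Lean document; each statement's English description precedes it below -/
import Mathlib

section
/- For every α, d ∈ (0,1], there exists ρ > 0 such that the following holds for any sufficiently large integer n. Let H be an n-vertex (ρ,d)-cherry-dense 3-graph satisfying δ₁(H) ≥ α·C(n,2), and let H' be a spanning subgraph of H such that for every pair S of distinct vertices either deg_{H'}(S) ≥ dn/3 or deg_{H'}(S) = 0, and the number of pairs S with deg_{H'}(S) = 0 is at most ρ^{1/5}·C(n,2). Let v ∈ V(H). Then for any W ⊆ V(H) with |W| ≤ αn/4, there exists a v-absorber (v₁,v₂,v₃,v₄) with all of v₁,v₂,v₃,v₄ in V(H) \ W, such that deg_{H'}(v₁v₂) ≥ dn/3 and deg_{H'}(v₃v₄) ≥ dn/3. -/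
/-!
The link graph of `v`, restricted to pairs that avoid `W` and have positive codegree in `H'`, is
dense: the minimum degree gives about `αn²/2` edges, at most `αn²/4` of them meet `W`, and only
`ρ^{1/5}n²/2` pairs have codegree zero (`link_card`). Let `G` be the symmetric set of ordered pairs
of this graph. Call `(y,z) ∈ G` *poor* if at most one `x` satisfies `(x,y) ∈ G` and `{x,y,z} ∈ H`,
and let `B` be the set of poor pairs. The pair `(G,B)` spans at least `|B|²/n` cherries by
Cauchy–Schwarz (`sq_card_le_mul_cherries`), but at most `|B| ≤ n²` of them are edges of `H`, so
cherry-density gives `d|B|² ≤ ρn⁴ + n³` (`poor_sq_le`), and hence `2|B| < |G|`. Thus some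
`(y,z) ∈ G` has neither `(y,z)` nor `(z,y)` poor. There are then two choices of `x` on the side of
`y` and two choices of `w` on the side of `z`, so `x ≠ w` can be arranged, and `(x,y,z,w)` is the
required absorber.
-/

open Finset

/-- An `n`-vertex 3-graph `H` is `(ρ,d)`-cherry-dense if for all sets of ordered pairs
`G₁, G₂ ⊆ V × V`, the number of cherries `(x,y,z)` with `(x,y) ∈ G₁`, `(y,z) ∈ G₂` and
`{x,y,z} ∈ E(H)` is at least `d·|P₂(G₁,G₂)| − ρn³`. -/
def CherryDense (n : ℕ) (H : Finset (Finset (Fin n))) (ρ d : ℝ) : Prop :=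
  ∀ G₁ G₂ : Finset (Fin n × Fin n),
    ((((Finset.univ : Finset (Fin n × Fin n × Fin n)).filter fun t =>
          (t.1, t.2.1) ∈ G₁ ∧ (t.2.1, t.2.2) ∈ G₂).filter fun t =>
          ({t.1, t.2.1, t.2.2} : Finset (Fin n)) ∈ H).card : ℝ) ≥
      d * (((Finset.univ : Finset (Fin n × Fin n × Fin n)).filter fun t =>
          (t.1, t.2.1) ∈ G₁ ∧ (t.2.1, t.2.2) ∈ G₂).card : ℝ) - ρ * (n : ℝ) ^ 3

/-- The vertex degree `deg_H(v)`: the number of edges of `H` containing `v`. -/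
def vdeg (n : ℕ) (H : Finset (Finset (Fin n))) (v : Fin n) : ℕ :=
  (H.filter fun e => v ∈ e).card

/-- The codegree `deg_H(xy)`: the number of edges of `H` containing both `x` and `y`. -/
def codeg (n : ℕ) (H : Finset (Finset (Fin n))) (x y : Fin n) : ℕ :=
  (H.filter fun e => x ∈ e ∧ y ∈ e).card

/-- The codegree of an (unordered) pair `S`: the number of edges of `H` containing `S`. -/
def pairDeg (n : ℕ) (H : Finset (Finset (Fin n))) (S : Finset (Fin n)) : ℕ :=
  (H.filter fun e => S ⊆ e).card

/-- `(x,y,z,w)` is a `v`-absorber: `v,x,y,z,w` are pairwise distinct and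
`{x,y,z}, {y,z,w}, {v,x,y}, {v,y,z}, {v,z,w}` are all edges of `H`. -/
def IsAbsorber (n : ℕ) (H : Finset (Finset (Fin n))) (v x y z w : Fin n) : Prop :=
  ([v, x, y, z, w] : List (Fin n)).Nodup ∧
    ({x, y, z} : Finset (Fin n)) ∈ H ∧ ({y, z, w} : Finset (Fin n)) ∈ H ∧
    ({v, x, y} : Finset (Fin n)) ∈ H ∧ ({v, y, z} : Finset (Fin n)) ∈ H ∧
    ({v, z, w} : Finset (Fin n)) ∈ H

instance (n : ℕ) (H : Finset (Finset (Fin n))) (v x y z w : Fin n) :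
    Decidable (IsAbsorber n H v x y z w) := by
  unfold IsAbsorber; infer_instance

/-- The ordered pairs `(a,b)` in the link of `v` in `H` that avoid `W` and have positive codegree
in `H'`. -/
def goodLink (n : ℕ) (H H' : Finset (Finset (Fin n))) (v : Fin n) (W : Finset (Fin n)) :
    Finset (Fin n × Fin n) :=
  Finset.univ.filter fun p =>
    ({v, p.1, p.2} : Finset (Fin n)) ∈ H ∧ p.1 ∉ W ∧ p.2 ∉ W ∧ codeg n H' p.1 p.2 ≠ 0

/-- The poor pairs of `G`: those `(y,z) ∈ G` for which at most one `x` satisfies `(x,y) ∈ G` and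
`{x,y,z} ∈ H`. -/
noncomputable def poor (n : ℕ) (H : Finset (Finset (Fin n))) (G : Finset (Fin n × Fin n)) :
    Finset (Fin n × Fin n) :=
  open Classical in
  G.filter fun p => ∀ x x' : Fin n, (x, p.1) ∈ G → ({x, p.1, p.2} : Finset (Fin n)) ∈ H →
    (x', p.1) ∈ G → ({x', p.1, p.2} : Finset (Fin n)) ∈ H → x = x'

/-- Symmetry of `G` and `B ⊆ G` make every in-degree of `G` at least the out-degree of `B`, so the
cherries number at least the sum of the squared out-degrees of `B`; Cauchy–Schwarz finishes. -/
lemma sq_card_le_mul_cherries (n : ℕ) (G B : Finset (Fin n × Fin n)) (hBG : B ⊆ G)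
    (hsymm : ∀ a b, (a, b) ∈ G → (b, a) ∈ G) :
    B.card ^ 2 ≤ n * ((Finset.univ : Finset (Fin n × Fin n × Fin n)).filter fun t =>
          (t.1, t.2.1) ∈ G ∧ (t.2.1, t.2.2) ∈ B).card := by
  have hB : B.card = ∑ y : Fin n, (Finset.univ.filter fun z => (y, z) ∈ B).card := by
    rw [Finset.card_eq_sum_card_fiberwise (f := Prod.fst) (t := Finset.univ) (by simp)]
    refine Finset.sum_congr rfl fun y _ => ?_
    refine Finset.card_bij' (fun p _ => p.2) (fun z _ => (y, z)) ?_ ?_ ?_ ?_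
    · rintro ⟨a, b⟩ h
      simp only [Finset.mem_filter] at h
      obtain ⟨h, rfl⟩ := h
      simpa using h
    · intro z h
      simpa using h
    · rintro ⟨a, b⟩ h
      simp only [Finset.mem_filter] at h
      obtain ⟨h, rfl⟩ := h
      rfl
    · intro z h
      rfl
  have hP : ((Finset.univ : Finset (Fin n × Fin n × Fin n)).filter fun t =>
          (t.1, t.2.1) ∈ G ∧ (t.2.1, t.2.2) ∈ B).card
      = ∑ y : Fin n, (Finset.univ.filter fun x => (x, y) ∈ G).card *
          (Finset.univ.filter fun z => (y, z) ∈ B).card := by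
    rw [Finset.card_eq_sum_card_fiberwise (f := fun t => t.2.1) (t := Finset.univ) (by simp)]
    refine Finset.sum_congr rfl fun y _ => ?_
    rw [← Finset.card_product]
    refine Finset.card_bij' (fun t _ => (t.1, t.2.2)) (fun p _ => (p.1, y, p.2)) ?_ ?_ ?_ ?_
    · rintro ⟨a, b, c⟩ h
      simp only [Finset.mem_filter] at h
      obtain ⟨⟨_, h1, h2⟩, rfl⟩ := h
      simp [h1, h2]
    · rintro ⟨a, c⟩ h
      simpa using h
    · rintro ⟨a, b, c⟩ h
      simp only [Finset.mem_filter] at h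
      obtain ⟨_, rfl⟩ := h
      rfl
    · rintro ⟨a, c⟩ h
      rfl
  rw [hP, hB]
  refine (sq_sum_le_card_mul_sum_sq).trans ?_
  simp only [Finset.card_univ, Fintype.card_fin]
  refine Nat.mul_le_mul_left _ (Finset.sum_le_sum fun y _ => ?_)
  rw [sq]
  refine Nat.mul_le_mul_right _ (Finset.card_le_card fun z hz => ?_)
  simp only [Finset.mem_filter, Finset.mem_univ, true_and] at hz ⊢
  exact hsymm _ _ (hBG hz)

/-- A poor pair `(y,z)` extends to at most one cherry that is an edge of `H`, so cherry-density
bounds the number of poor pairs. -/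
lemma poor_sq_le (n : ℕ) (H : Finset (Finset (Fin n))) (ρ d : ℝ) (hd : 0 < d)
    (hH : CherryDense n H ρ d) (G : Finset (Fin n × Fin n))
    (hsymm : ∀ a b, (a, b) ∈ G → (b, a) ∈ G) :
    d * ((poor n H G).card : ℝ) ^ 2 ≤ ρ * (n : ℝ) ^ 4 + (n : ℝ) ^ 3 := by
  have hsub : poor n H G ⊆ G := Finset.filter_subset _ _
  have h1 := sq_card_le_mul_cherries n G (poor n H G) hsub hsymm
  have h2 := hH G (poor n H G)
  have h3 : ((((Finset.univ : Finset (Fin n × Fin n × Fin n)).filter fun t =>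
          (t.1, t.2.1) ∈ G ∧ (t.2.1, t.2.2) ∈ poor n H G).filter fun t =>
          ({t.1, t.2.1, t.2.2} : Finset (Fin n)) ∈ H).card) ≤ (poor n H G).card := by
    refine Finset.card_le_card_of_injOn (fun t => t.2) ?_ ?_
    · rintro ⟨a, b, c⟩ h
      simp only [Finset.coe_filter, Finset.mem_filter, Set.mem_ofPred_eq] at h
      exact h.1.2.2
    · rintro ⟨a, b, c⟩ h ⟨a', b', c'⟩ h' heq
      simp only [Finset.coe_filter, Finset.mem_filter, Set.mem_ofPred_eq, Finset.mem_univ,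
        true_and] at h h'
      obtain ⟨rfl, rfl⟩ := Prod.mk.inj heq
      have hp := h.1.2
      simp only [poor, Finset.mem_filter] at hp
      rw [hp.2 a a' h.1.1 h.2 h'.1.1 h'.2]
  have h4 : (poor n H G).card ≤ n ^ 2 := by
    refine (Finset.card_le_univ _).trans ?_
    simp [sq]
  have h1' : ((poor n H G).card : ℝ) ^ 2 ≤ n *
      (((Finset.univ : Finset (Fin n × Fin n × Fin n)).filter fun t =>
          (t.1, t.2.1) ∈ G ∧ (t.2.1, t.2.2) ∈ poor n H G).card : ℝ) := by exact_mod_cast h1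
  have h5 : ((((Finset.univ : Finset (Fin n × Fin n × Fin n)).filter fun t =>
          (t.1, t.2.1) ∈ G ∧ (t.2.1, t.2.2) ∈ poor n H G).filter fun t =>
          ({t.1, t.2.1, t.2.2} : Finset (Fin n)) ∈ H).card : ℝ) ≤ (n : ℝ) ^ 2 := by
    exact_mod_cast h3.trans h4
  have hn : (0 : ℝ) ≤ n := Nat.cast_nonneg n
  have h6 := mul_le_mul_of_nonneg_left (h2.le.trans h5) hn
  have h7 := mul_le_mul_of_nonneg_left h1' hd.le
  linarith

/-- Every edge at `v` comes from a pair in `goodLink`, or meets `W` outside `v`, or leaves a pair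
of codegree zero after removing `v`. -/
lemma link_card (n : ℕ) (H H' : Finset (Finset (Fin n))) (h3 : ∀ e ∈ H, e.card = 3)
    (v : Fin n) (W : Finset (Fin n)) :
    vdeg n H v ≤ (goodLink n H H' v W).card + W.card * n +
      (((Finset.univ : Finset (Fin n)).powersetCard 2).filter fun S =>
            pairDeg n H' S = 0).card := by
  set bad := ((Finset.univ : Finset (Fin n)).powersetCard 2).filter fun S =>
            pairDeg n H' S = 0 with hbad
  have hcover : (H.filter fun e => v ∈ e) ⊆
      ((goodLink n H H' v W).image (fun p => ({v, p.1, p.2} : Finset (Fin n))) ∪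
      (W ×ˢ (Finset.univ : Finset (Fin n))).image (fun p => ({v, p.1, p.2} : Finset (Fin n)))) ∪
      bad.image (fun S => insert v S) := by
    intro e he
    obtain ⟨heH, hve⟩ := Finset.mem_filter.1 he
    have hc : (e.erase v).card = 2 := by rw [Finset.card_erase_of_mem hve, h3 e heH]
    obtain ⟨a, b, hab, hS⟩ := Finset.card_eq_two.1 hc
    have hE : e = {v, a, b} := by rw [← Finset.insert_erase hve, hS]
    have hE' : e = {v, b, a} := by rw [hE, Finset.pair_comm]
    simp only [Finset.mem_union, Finset.mem_image]
    by_cases ha : a ∈ W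
    · exact Or.inl (Or.inr ⟨(a, b), by simp [ha], hE.symm⟩)
    by_cases hb : b ∈ W
    · exact Or.inl (Or.inr ⟨(b, a), by simp [hb], hE'.symm⟩)
    by_cases hz : codeg n H' a b = 0
    · refine Or.inr ⟨{a, b}, ?_, hE.symm⟩
      rw [hbad, Finset.mem_filter, Finset.mem_powersetCard]
      refine ⟨⟨Finset.subset_univ _, Finset.card_pair hab⟩, ?_⟩
      rw [← hz]
      simp [pairDeg, codeg, Finset.insert_subset_iff]
    · exact Or.inl (Or.inl ⟨(a, b), by simp [goodLink, ha, hb, hz, ← hE, heH], hE.symm⟩)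
  calc vdeg n H v ≤ _ := Finset.card_le_card hcover
    _ ≤ _ := Finset.card_union_le _ _
    _ ≤ _ := Nat.add_le_add ((Finset.card_union_le _ _).trans
        (Nat.add_le_add Finset.card_image_le Finset.card_image_le)) Finset.card_image_le
    _ = _ := by simp

/-- If fewer than half of the pairs of `G` are poor, some pair of `G` is poor in
neither orientation. -/
lemma exists_rich (n : ℕ) (H : Finset (Finset (Fin n))) (G : Finset (Fin n × Fin n))
    (hlt : 2 * (poor n H G).card < G.card) :
    ∃ y z, (y, z) ∈ G ∧ (y, z) ∉ poor n H G ∧ (z, y) ∉ poor n H G := by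
  by_contra! hcon
  have hsub : G ⊆ poor n H G ∪ (poor n H G).image Prod.swap := by
    rintro ⟨y, z⟩ hyz
    rw [Finset.mem_union, Finset.mem_image]
    by_cases h : (y, z) ∈ poor n H G
    · exact Or.inl h
    · exact Or.inr ⟨(z, y), hcon y z hyz h, rfl⟩
  have := (Finset.card_le_card hsub).trans (Finset.card_union_le _ _)
  have h2 : ((poor n H G).image Prod.swap).card ≤ _ := Finset.card_image_le
  omega

/-- A pair of the good link that is poor in neither orientation extends to an absorber. -/
lemma absorber_of_rich (n : ℕ) (H H' : Finset (Finset (Fin n))) (h3 : ∀ e ∈ H, e.card = 3)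
    (v : Fin n) (W : Finset (Fin n)) (y z : Fin n) (hyz : (y, z) ∈ goodLink n H H' v W)
    (hzy : (z, y) ∈ goodLink n H H' v W)
    (h1 : (y, z) ∉ poor n H (goodLink n H H' v W))
    (h2 : (z, y) ∉ poor n H (goodLink n H H' v W)) :
    ∃ x w, IsAbsorber n H v x y z w ∧ (x, y) ∈ goodLink n H H' v W ∧
      (w, z) ∈ goodLink n H H' v W := by
  -- an edge written with three vertices has three distinct vertices
  have hne : ∀ a b c : Fin n, ({a, b, c} : Finset (Fin n)) ∈ H → a ≠ b ∧ a ≠ c ∧ b ≠ c :=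
    by
    intro a b c h
    have hc := h3 _ h
    refine ⟨?_, ?_, ?_⟩ <;> rintro rfl
    · have h2 := Finset.card_le_two (a := a) (b := c)
      rw [Finset.insert_eq_of_mem (by simp)] at hc
      omega
    · have h2 := Finset.card_le_two (a := b) (b := a)
      rw [Finset.insert_eq_of_mem (by simp)] at hc
      omega
    · have h2 := Finset.card_le_two (a := a) (b := b)
      rw [Finset.pair_eq_singleton] at hc
      omega
  simp only [poor, Finset.mem_filter, hyz, hzy, true_and] at h1 h2
  push Not at h1 h2
  obtain ⟨x, x', hx, hxH, hx', hxH', hxx⟩ := h1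
  obtain ⟨w₀, w', hw, hwH, hw', hwH', hww⟩ := h2
  obtain ⟨w, hwG, hwE, hxw⟩ : ∃ w, (w, z) ∈ goodLink n H H' v W ∧
      ({w, z, y} : Finset (Fin n)) ∈ H ∧ x ≠ w := by
    by_cases h : x = w₀
    · exact ⟨w', hw', hwH', h ▸ hww⟩
    · exact ⟨w₀, hw, hwH, h⟩
  refine ⟨x, w, ?_, hx, hwG⟩
  simp only [goodLink, Finset.mem_filter, Finset.mem_univ, true_and] at hx hwG hyz
  have e1 := hne _ _ _ hxH
  have e2 := hne _ _ _ hwE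
  have e3 := hne _ _ _ hx.1
  have e4 := hne _ _ _ hwG.1
  refine ⟨?_, hxH, ?_, hx.1, hyz.1, ?_⟩
  · simp only [List.nodup_cons, List.mem_cons, List.not_mem_nil, List.nodup_nil]
    grind
  · convert hwE using 1
    grind
  · convert hwG.1 using 1
    grind

/-- For every `α, d ∈ (0,1]` there exists `ρ > 0` such that for sufficiently large `n`:
given an `n`-vertex `(ρ,d)`-cherry-dense 3-graph `H` with `δ₁(H) ≥ α·C(n,2)`, a spanning
subgraph `H'` in which every pair has codegree `≥ dn/3` or `0` with at most
`ρ^{1/5}·C(n,2)` zero-codegree pairs, a vertex `v` and a set `W` with `|W| ≤ αn/4`, there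
is a `v`-absorber `(v₁,v₂,v₃,v₄)` avoiding `W` with `deg_{H'}(v₁v₂) ≥ dn/3` and
`deg_{H'}(v₃v₄) ≥ dn/3`. -/
theorem stmt_5 (α d : ℝ) (hα : 0 < α) (hα1 : α ≤ 1) (hd : 0 < d) (hd1 : d ≤ 1) :
    ∃ ρ : ℝ, 0 < ρ ∧ ∃ n₀ : ℕ, ∀ n : ℕ, n₀ ≤ n →
      ∀ H H' : Finset (Finset (Fin n)),
        (∀ e ∈ H, e.card = 3) →
        CherryDense n H ρ d →
        (∀ u : Fin n, α * (n.choose 2 : ℝ) ≤ (vdeg n H u : ℝ)) →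
        H' ⊆ H →
        (∀ x y : Fin n, x ≠ y →
          d * (n : ℝ) / 3 ≤ (codeg n H' x y : ℝ) ∨ codeg n H' x y = 0) →
        ((((Finset.univ : Finset (Fin n)).powersetCard 2).filter fun S =>
            pairDeg n H' S = 0).card : ℝ) ≤ ρ ^ ((1 : ℝ) / 5) * (n.choose 2 : ℝ) →
        ∀ v : Fin n, ∀ W : Finset (Fin n), (W.card : ℝ) ≤ α * (n : ℝ) / 4 →
          ∃ v₁ v₂ v₃ v₄ : Fin n,
            IsAbsorber n H v v₁ v₂ v₃ v₄ ∧
            v₁ ∉ W ∧ v₂ ∉ W ∧ v₃ ∉ W ∧ v₄ ∉ W ∧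
            d * (n : ℝ) / 3 ≤ (codeg n H' v₁ v₂ : ℝ) ∧
            d * (n : ℝ) / 3 ≤ (codeg n H' v₃ v₄ : ℝ) := by
  classical
  -- `ρ^{1/5} ≤ α/8` keeps `|G| ≥ αn²/8`; `ρ ≤ dα²/1024` and `n ≥ 1024/(dα²)` give
  -- `ρn⁴ + n³ ≤ dα²n⁴/512`, so fewer than `αn²/16` pairs are poor
  refine ⟨min ((α / 8) ^ 5) (d * α ^ 2 / 1024), by positivity, ⌈1024 / (d * α ^ 2)⌉₊, ?_⟩
  intro n hn H H' h3 hcd hdeg _ hco hbad v W hW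
  set ρ : ℝ := min ((α / 8) ^ 5) (d * α ^ 2 / 1024) with hρ
  have hρ0 : 0 < ρ := by positivity
  have hda : 0 < d * α ^ 2 := by positivity
  have hda1 : d * α ^ 2 ≤ 1 := mul_le_one₀ hd1 (by positivity) (pow_le_one₀ hα.le hα1)
  have hn1 : 1024 ≤ d * α ^ 2 * n := by
    have := (Nat.le_ceil _).trans (Nat.cast_le (α := ℝ).2 hn)
    rw [div_le_iff₀ hda] at this
    linarith
  have hn8 : (8 : ℝ) ≤ n := by
    have : d * α ^ 2 * n ≤ 1 * n := mul_le_mul_of_nonneg_right hda1 (Nat.cast_nonneg n)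
    linarith
  have hroot : ρ ^ ((1 : ℝ) / 5) ≤ α / 8 := by
    calc ρ ^ ((1 : ℝ) / 5) ≤ ((α / 8) ^ 5) ^ ((1 : ℝ) / 5) :=
          Real.rpow_le_rpow hρ0.le (min_le_left _ _) (by norm_num)
      _ = α / 8 := by
          rw [← Real.rpow_natCast, ← Real.rpow_mul (by positivity)]
          norm_num
  have hchoose : (n.choose 2 : ℝ) = n * (n - 1) / 2 := Nat.cast_choose_two ℝ n
  set G := goodLink n H H' v W with hG
  have hsymm : ∀ a b, (a, b) ∈ G → (b, a) ∈ G := by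
    intro a b h
    simp only [hG, goodLink, Finset.mem_filter, Finset.mem_univ, true_and] at h ⊢
    refine ⟨?_, h.2.2.1, h.2.1, ?_⟩
    · rw [Finset.pair_comm]
      exact h.1
    · have : codeg n H' b a = codeg n H' a b := by simp only [codeg, and_comm]
      rw [this]
      exact h.2.2.2
  have hGcard : α * (n : ℝ) ^ 2 / 8 ≤ (G.card : ℝ) := by
    have h1 : (vdeg n H v : ℝ) ≤ (G.card : ℝ) + W.card * n +
        (((Finset.univ : Finset (Fin n)).powersetCard 2).filter fun S =>
            pairDeg n H' S = 0).card := by exact_mod_cast link_card n H H' h3 v W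
    have h2 := hdeg v
    have h4 : (W.card : ℝ) * n ≤ α * n / 4 * n := mul_le_mul_of_nonneg_right hW (by linarith)
    have h5 : ρ ^ ((1 : ℝ) / 5) * (n.choose 2 : ℝ) ≤ α / 8 * (n.choose 2 : ℝ) :=
      mul_le_mul_of_nonneg_right hroot (Nat.cast_nonneg _)
    rw [hchoose] at h2 h5 hbad
    have h6 : α * n * 8 ≤ α * n * n := mul_le_mul_of_nonneg_left hn8 (by positivity)
    have h7 : 0 ≤ α * n := by positivity
    nlinarith
  have hpoor : ((poor n H G).card : ℝ) < α * (n : ℝ) ^ 2 / 16 := by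
    have h1 := poor_sq_le n H ρ d hd hcd G hsymm
    have h2 : ρ * (n : ℝ) ^ 4 ≤ d * α ^ 2 / 1024 * (n : ℝ) ^ 4 :=
      mul_le_mul_of_nonneg_right (min_le_right _ _) (by positivity)
    have h4 : 1024 * (n : ℝ) ^ 3 ≤ d * α ^ 2 * n * (n : ℝ) ^ 3 :=
      mul_le_mul_of_nonneg_right hn1 (by positivity)
    have h5 : 0 < d * α ^ 2 * (n : ℝ) ^ 4 := by positivity
    refine lt_of_pow_lt_pow_left₀ 2 (by positivity) (lt_of_mul_lt_mul_left ?_ hd.le)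
    nlinarith
  have hlt : 2 * (poor n H G).card < G.card := by
    have : (2 : ℝ) * (poor n H G).card < G.card := by linarith
    exact_mod_cast this
  obtain ⟨y, z, hyz, hy, hz⟩ := exists_rich n H G hlt
  obtain ⟨x, w, habs, hx, hw⟩ :=
    absorber_of_rich n H H' h3 v W y z hyz (hsymm _ _ hyz) hy hz
  have hzw := hsymm _ _ hw
  simp only [hG, goodLink, Finset.mem_filter, Finset.mem_univ, true_and] at hx hzw
  have hnd := habs.1
  simp only [List.nodup_cons, List.mem_cons, List.not_mem_nil, List.nodup_nil] at hnd
  refine ⟨x, y, z, w, habs, hx.2.1, hx.2.2.1, hzw.2.1, hzw.2.2.1, ?_, ?_⟩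
  · exact (hco x y (by grind)).resolve_right hx.2.2.2
  · exact (hco z w (by grind)).resolve_right hzw.2.2.2
end

section
/- For every d, β ∈ (0,1] with β < d, there exist an integer n₀ > 0 and a real ρ₀ > 0 such that the following holds for all n ≥ n₀ and 0 < ρ < ρ₀. Let H be an n-vertex (ρ,d)-cherry-dense 3-graph and let H' be a spanning subgraph of H such that for any pair of distinct vertices x, y, either deg_{H'}(xy) = 0 or deg_{H'}(xy) ≥ βn. Let (x,y) and (x',y') be two disjoint ordered pairs of vertices such that deg_{H'}(xy) > 0 and deg_{H'}(x'y') > 0. Then there exists a tight path in H on 10 vertices whose ends are (x,y) and (x',y'). -/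
/-!
Write the path as `y x v₃ v₄ v₅ v₆ v₇ v₈ x' y'`. Since every pair of positive `H'`-codegree
has linear codegree, the pair `(x, y)` extends inside `H'` to at least `β³n³` triples
`(v₃, v₄, v₅)`. Averaging twice (`exists_reachable`) gives linearly many vertices `v₅` for which
linearly many `v₄` admit linearly many `v₃`; symmetrically, `(x', y')` yields linearly many `v₆`
with linearly many `v₇`, each admitting linearly many `v₈`.

It remains to find `v₅, v₆` such that `v₄v₅v₆` and `v₅v₆v₇` are edges of `H` for linearly many
such `v₄` and `v₇`. Cherry-density shows that only `O(ρn²)` pairs `(v₅, v₆)` fail for one of the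
two sides (`card_poor_pairs_le`), while the candidates form a set of `Ω(n²)` pairs, so for small
`ρ` a good pair exists. The remaining vertices are then chosen greedily, in the order
`v₄, v₇, v₃, v₈`, avoiding the boundedly many vertices already used.
-/

open Finset

/-- A tight path in `H`: a list of distinct vertices in which every 3 consecutive
vertices form an edge of `H`. -/
def IsTightPath (n : ℕ) (H : Finset (Finset (Fin n))) (L : List (Fin n)) : Prop :=
  L.Nodup ∧ ∀ i : ℕ, ∀ h : i + 2 < L.length,
    ({L.get ⟨i, by omega⟩, L.get ⟨i + 1, by omega⟩, L.get ⟨i + 2, h⟩} : Finset (Fin n)) ∈ H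

/-- The tight path `L = v₁v₂…v_p` has ends `(a,b) = (v₂,v₁)` and `(c,e) = (v_{p-1},v_p)`. -/
def PathEnds (n : ℕ) (L : List (Fin n)) (a b c e : Fin n) : Prop :=
  ∃ h : 2 ≤ L.length,
    L.get ⟨1, by omega⟩ = a ∧ L.get ⟨0, by omega⟩ = b ∧
    L.get ⟨L.length - 2, by omega⟩ = c ∧ L.get ⟨L.length - 1, by omega⟩ = e

/-! ### Averaging and codegrees in 3-graphs -/

/-- Averaging: if `f ≤ M` pointwise and `f` has mean at least `2aM`, then `f ≥ aM` on at least
an `a`-fraction of the points. -/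
lemma card_large_of_sum {n : ℕ} (f : Fin n → ℝ) (M a : ℝ) (hM : 0 < M) (ha : 0 ≤ a)
    (hf : ∀ v, f v ≤ M) (hs : 2 * a * M * n ≤ ∑ v, f v) :
    a * n ≤ ((univ.filter fun v => a * M ≤ f v).card : ℝ) := by
  have h1 : ∑ v, f v ≤ ∑ v : Fin n, ((if a * M ≤ f v then M else 0) + a * M) := by
    apply Finset.sum_le_sum
    intro v _
    have := hf v
    have : 0 ≤ a * M := by positivity
    split_ifs with h
    · linarith
    · linarith [not_le.mp h]
  rw [Finset.sum_add_distrib, ← Finset.sum_filter, Finset.sum_const, Finset.sum_const,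
    nsmul_eq_mul, nsmul_eq_mul, Finset.card_univ, Fintype.card_fin] at h1
  have h2 : (a * n) * M ≤ ((univ.filter fun v => a * M ≤ f v).card : ℝ) * M := by linarith
  exact le_of_mul_le_mul_right h2 hM

lemma ne_of_card_three {n : ℕ} {a b c : Fin n} (h : ({a, b, c} : Finset (Fin n)).card = 3) :
    a ≠ b ∧ a ≠ c ∧ b ≠ c := by
  have h2 : ∀ u v : Fin n, ({u, v} : Finset (Fin n)).card ≠ 3 := fun u v h' => by
    have := Finset.card_le_two (a := u) (b := v)
    omega
  refine ⟨?_, ?_, ?_⟩ <;> rintro rfl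
  · exact h2 a c (by rwa [Finset.insert_idem] at h)
  · exact h2 b a (by rwa [Finset.insert_comm, Finset.pair_eq_singleton] at h)
  · exact h2 a b (by rwa [Finset.pair_eq_singleton] at h)

lemma triple_comm (n : ℕ) (a b c : Fin n) : ({a, b, c} : Finset (Fin n)) = {c, b, a} := by
  ext; simp; tauto

/-- In a 3-graph, the codegree of a pair is bounded by the number of third vertices. -/
lemma codeg_le_card {n : ℕ} {H : Finset (Finset (Fin n))} (h3 : ∀ e ∈ H, e.card = 3)
    {x y : Fin n} (hxy : x ≠ y) :
    codeg n H x y ≤ (univ.filter fun v => ({x, y, v} : Finset (Fin n)) ∈ H).card := by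
  unfold codeg
  refine le_trans (Finset.card_le_card ?_)
    (Finset.card_image_le (f := fun v => ({x, y, v} : Finset (Fin n))))
  intro e he
  simp only [mem_filter] at he
  obtain ⟨he, hx, hy⟩ := he
  have hsub : ({x, y} : Finset (Fin n)) ⊆ e := by
    intro z; simp; rintro (rfl | rfl) <;> assumption
  have hc : (e \ {x, y}).card = 1 := by
    rw [Finset.card_sdiff_of_subset hsub, h3 e he, Finset.card_pair hxy]
  obtain ⟨v, hv⟩ := Finset.card_eq_one.mp hc
  have hev : ({x, y, v} : Finset (Fin n)) = e := by
    rw [← Finset.union_sdiff_of_subset hsub, hv]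
    ext; simp
  simp only [mem_image, mem_filter, mem_univ, true_and]
  exact ⟨v, hev ▸ he, hev⟩

/-- When every codegree is `0` or at least `βn`, a pair lying in some edge has at least `βn`
extensions to an edge. -/
lemma card_extensions {n : ℕ} {β : ℝ} {H : Finset (Finset (Fin n))} (h3 : ∀ e ∈ H, e.card = 3)
    (hdeg : ∀ x y : Fin n, x ≠ y → codeg n H x y = 0 ∨ β * (n : ℝ) ≤ (codeg n H x y : ℝ))
    {w x y : Fin n} (h : ({w, x, y} : Finset (Fin n)) ∈ H) :
    β * n ≤ ((univ.filter fun v => ({x, y, v} : Finset (Fin n)) ∈ H).card : ℝ) := by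
  have hxy := (ne_of_card_three (h3 _ h)).2.2
  have hpos : codeg n H x y ≠ 0 := by
    unfold codeg
    rw [Finset.card_ne_zero]
    exact ⟨_, by simp only [mem_filter]; exact ⟨h, by simp, by simp⟩⟩
  refine ((hdeg x y hxy).resolve_left hpos).trans ?_
  exact_mod_cast codeg_le_card h3 hxy

lemma mul_le_sum_ite {n : ℕ} (p : Fin n → Prop) [DecidablePred p] (f : Fin n → ℝ) {a b : ℝ}
    (hb : 0 ≤ b) (ha : a ≤ ((univ.filter p).card : ℝ)) (hf : ∀ u, p u → b ≤ f u) :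
    a * b ≤ ∑ u, if p u then f u else 0 := by
  rw [← Finset.sum_filter]
  refine (mul_le_mul_of_nonneg_right ha hb).trans ?_
  rw [← nsmul_eq_mul]
  exact Finset.card_nsmul_le_sum _ _ _ fun u hu => hf u (mem_filter.mp hu).2

/-! ### Extending a pair inside `H'` -/

/-- The vertices `u` such that `y x u w s` is a tight walk in `H`. -/
def starts (n : ℕ) (H : Finset (Finset (Fin n))) (x y w s : Fin n) : Finset (Fin n) :=
  univ.filter fun u => ({y, x, u} : Finset (Fin n)) ∈ H ∧ ({x, u, w} : Finset (Fin n)) ∈ H ∧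
    ({u, w, s} : Finset (Fin n)) ∈ H

/-- There are linearly many vertices `s` for which linearly many `w` admit linearly many tight
walks `y x u w s`. -/
lemma exists_reachable {n : ℕ} {β : ℝ} (hβ : 0 < β) (hn : 0 < n) {H : Finset (Finset (Fin n))}
    (h3 : ∀ e ∈ H, e.card = 3)
    (hdeg : ∀ x y : Fin n, x ≠ y → codeg n H x y = 0 ∨ β * (n : ℝ) ≤ (codeg n H x y : ℝ))
    {x y : Fin n} (hxy : x ≠ y) (hpos : 0 < codeg n H x y) :
    ∃ S : Finset (Fin n), β ^ 3 / 4 * n ≤ (S.card : ℝ) ∧ ∀ s ∈ S,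
      β ^ 3 / 4 * n ≤
        ((univ.filter fun w => β ^ 3 / 4 * n ≤ ((starts n H x y w s).card : ℝ)).card : ℝ) := by
  have hn' : (0 : ℝ) < n := by exact_mod_cast hn
  -- The total number of walks, as an iterated sum.
  have htot : β ^ 3 * n ^ 3 ≤ ∑ s : Fin n, ∑ w : Fin n, ((starts n H x y w s).card : ℝ) := by
    have hN : β * n ≤ ((univ.filter fun u => ({y, x, u} : Finset (Fin n)) ∈ H).card : ℝ) := by
      refine ((hdeg x y hxy).resolve_left hpos.ne').trans ?_
      have := codeg_le_card h3 hxy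
      simp only [Finset.insert_comm x y] at this
      exact_mod_cast this
    have hsum : ∑ s : Fin n, ∑ w : Fin n, ((starts n H x y w s).card : ℝ) =
        ∑ u : Fin n, if ({y, x, u} : Finset (Fin n)) ∈ H then
          (∑ w : Fin n, if ({x, u, w} : Finset (Fin n)) ∈ H then
            ((univ.filter fun s => ({u, w, s} : Finset (Fin n)) ∈ H).card : ℝ) else 0) else 0 := by
      have h1 : ∀ s w : Fin n, ((starts n H x y w s).card : ℝ) =
          ∑ u : Fin n, if ({y, x, u} : Finset (Fin n)) ∈ H then
            (if ({x, u, w} : Finset (Fin n)) ∈ H then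
              (if ({u, w, s} : Finset (Fin n)) ∈ H then (1 : ℝ) else 0) else 0) else 0 := by
        intro s w
        simp only [starts, Finset.card_filter, ite_and]
        push_cast
        rfl
      simp only [h1]
      rw [Finset.sum_congr rfl fun s _ => Finset.sum_comm, Finset.sum_comm]
      refine Finset.sum_congr rfl fun u _ => ?_
      rw [Finset.sum_comm]
      split_ifs with hu
      · refine Finset.sum_congr rfl fun w _ => ?_
        split_ifs with hw
        · simp
        · simp
      · simp
    rw [hsum, show β ^ 3 * (n : ℝ) ^ 3 = β * n * (β * n * (β * n)) by ring]
    refine mul_le_sum_ite _ _ (by positivity) hN fun u hu => ?_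
    exact mul_le_sum_ite _ _ (by positivity) (card_extensions h3 hdeg hu) fun w hw =>
      card_extensions h3 hdeg hw
  have hcn : ∀ A : Finset (Fin n), (A.card : ℝ) ≤ n := fun A => by
    have := Finset.card_le_univ A
    rw [Fintype.card_fin] at this
    exact_mod_cast this
  have hb : ∀ s : Fin n, ∑ w : Fin n, ((starts n H x y w s).card : ℝ) ≤ (n : ℝ) ^ 2 := by
    intro s
    refine (Finset.sum_le_sum fun w _ => hcn _).trans ?_
    simp [sq]
  refine ⟨univ.filter fun s => β ^ 3 / 2 * (n : ℝ) ^ 2 ≤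
    ∑ w : Fin n, ((starts n H x y w s).card : ℝ), ?_, ?_⟩
  · refine le_trans ?_ (card_large_of_sum _ ((n : ℝ) ^ 2) (β ^ 3 / 2) (by positivity)
      (by positivity) hb ?_)
    · gcongr; norm_num
    · refine le_trans (le_of_eq ?_) htot
      ring
  · intro s hs
    simp only [mem_filter, mem_univ, true_and] at hs
    refine card_large_of_sum (fun w => ((starts n H x y w s).card : ℝ)) n (β ^ 3 / 4) hn'
      (by positivity) (fun w => hcn _) (le_trans (le_of_eq ?_) hs)
    ring

/-! ### Poor pairs under cherry-density -/

/-- If every `s ∈ S` has at least `cn` vertices in `A s`, then few pairs `(s, t)` have less than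
half of the expected number of edges `{v, s, t}` with `v ∈ A s`. -/
lemma card_poor_pairs_le {n : ℕ} {ρ d c : ℝ} (hd : 0 < d) (hn : 0 < n)
    {H : Finset (Finset (Fin n))} (hH : CherryDense n H ρ d)
    (S : Finset (Fin n)) (A : Fin n → Finset (Fin n)) (hA : ∀ s ∈ S, c * n ≤ ((A s).card : ℝ)) :
    ((univ.filter fun p : Fin n × Fin n => p.1 ∈ S ∧
      (((A p.1).filter fun v => ({v, p.1, p.2} : Finset (Fin n)) ∈ H).card : ℝ)
        < d * c / 2 * n).card : ℝ) * (d * c / 2) ≤ ρ * (n : ℝ) ^ 2 := by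
  have hn' : (0 : ℝ) < n := by exact_mod_cast hn
  set B := univ.filter fun p : Fin n × Fin n => p.1 ∈ S ∧
      (((A p.1).filter fun v => ({v, p.1, p.2} : Finset (Fin n)) ∈ H).card : ℝ)
        < d * c / 2 * n with hB
  have key := hH (univ.filter fun p => p.1 ∈ A p.2) B
  set P := (univ : Finset (Fin n × Fin n × Fin n)).filter fun t =>
    (t.1, t.2.1) ∈ (univ.filter fun p : Fin n × Fin n => p.1 ∈ A p.2) ∧ (t.2.1, t.2.2) ∈ B with hP
  have hP1 : P.card = ∑ p ∈ B, (A p.1).card := by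
    rw [Finset.card_eq_sum_card_fiberwise (f := fun t => t.2) (t := B)]
    · refine Finset.sum_congr rfl fun p hp => ?_
      refine Finset.card_bij' (fun t _ => t.1) (fun v _ => (v, p)) ?_ ?_ ?_ ?_
      · rintro ⟨a, q⟩ h
        simp only [hP, mem_filter, mem_univ, true_and] at h
        obtain ⟨⟨h, -⟩, rfl⟩ := h
        exact h
      · intro v hv
        simp [hP, hv, hp]
      · rintro ⟨a, q⟩ h
        simp only [mem_filter] at h
        rw [← h.2]
      · intros; rfl
    · intro t ht
      simp only [hP, coe_filter, Set.mem_ofPred_eq] at ht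
      exact ht.2.2
  have hP2 : (P.filter fun t => ({t.1, t.2.1, t.2.2} : Finset (Fin n)) ∈ H).card =
      ∑ p ∈ B, ((A p.1).filter fun v => ({v, p.1, p.2} : Finset (Fin n)) ∈ H).card := by
    rw [Finset.card_eq_sum_card_fiberwise (f := fun t => t.2) (t := B)]
    · refine Finset.sum_congr rfl fun p hp => ?_
      refine Finset.card_bij' (fun t _ => t.1) (fun v _ => (v, p)) ?_ ?_ ?_ ?_
      · rintro ⟨a, q⟩ h
        simp only [hP, mem_filter, mem_univ, true_and] at h
        obtain ⟨⟨⟨h, -⟩, h'⟩, rfl⟩ := h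
        exact mem_filter.mpr ⟨h, h'⟩
      · intro v hv
        rw [mem_filter] at hv
        simp [hP, hv, hp]
      · rintro ⟨a, q⟩ h
        simp only [mem_filter] at h
        rw [← h.2]
      · intros; rfl
    · intro t ht
      simp only [hP, coe_filter, mem_filter, Set.mem_ofPred_eq] at ht
      exact ht.1.2.2
  rw [hP2, hP1] at key
  push_cast at key
  have h1 : (B.card : ℝ) * (c * n) ≤ ∑ p ∈ B, ((A p.1).card : ℝ) := by
    rw [← nsmul_eq_mul]
    exact Finset.card_nsmul_le_sum _ _ _ fun p hp => hA _ (mem_filter.mp hp).2.1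
  have h2 : ∑ p ∈ B, (((A p.1).filter fun v => ({v, p.1, p.2} : Finset (Fin n)) ∈ H).card : ℝ)
      ≤ (B.card : ℝ) * (d * c / 2 * n) := by
    rw [← nsmul_eq_mul]
    exact Finset.sum_le_card_nsmul _ _ _ fun p hp => (mem_filter.mp hp).2.2.le
  have h3 := mul_le_mul_of_nonneg_left h1 hd.le
  have h4 : (B.card : ℝ) * (d * c / 2) * n ≤ ρ * (n : ℝ) ^ 2 * n := by nlinarith
  exact le_of_mul_le_mul_right h4 hn'

/-! ### Building the path -/

/-- A set of more than nine vertices contains a vertex outside any set of at most nine. -/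
lemma exists_fresh {n : ℕ} (A F : Finset (Fin n)) (hF : F.card ≤ 9) {r : ℝ} (hr : 10 ≤ r)
    (hA : r ≤ (A.card : ℝ)) : ∃ v ∈ A, v ∉ F := by
  apply Finset.exists_mem_notMem_of_card_lt_card
  have : (10 : ℝ) ≤ A.card := hr.trans hA
  have : 10 ≤ A.card := by exact_mod_cast this
  omega

/-- Connection lemma: for `d, β ∈ (0,1]` with `β < d` there are `n₀` and `ρ₀ > 0` such
that for all `n ≥ n₀` and `0 < ρ < ρ₀`: if `H` is an `n`-vertex `(ρ,d)`-cherry-dense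
3-graph and `H'` a spanning subgraph in which every codegree is `0` or `≥ βn`, then any
two disjoint ordered pairs `(x,y)`, `(x',y')` with positive `H'`-codegree are connected
by a tight path in `H` on 10 vertices. -/
theorem stmt_6 (d β : ℝ) (hd : 0 < d) (hd1 : d ≤ 1) (hβ : 0 < β) (hβ1 : β ≤ 1)
    (hβd : β < d) :
    ∃ (n₀ : ℕ) (ρ₀ : ℝ), 0 < n₀ ∧ 0 < ρ₀ ∧
      ∀ n : ℕ, n₀ ≤ n → ∀ ρ : ℝ, 0 < ρ → ρ < ρ₀ →
        ∀ H H' : Finset (Finset (Fin n)),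
          (∀ e ∈ H, e.card = 3) →
          CherryDense n H ρ d →
          H' ⊆ H →
          (∀ x y : Fin n, x ≠ y →
            codeg n H' x y = 0 ∨ β * (n : ℝ) ≤ (codeg n H' x y : ℝ)) →
          ∀ x y x' y' : Fin n, ([x, y, x', y'] : List (Fin n)).Nodup →
            0 < codeg n H' x y → 0 < codeg n H' x' y' →
            ∃ L : List (Fin n), IsTightPath n H L ∧ L.length = 10 ∧
              PathEnds n L x y x' y' := by
  obtain ⟨c, hc⟩ : ∃ c, c = β ^ 3 / 4 := ⟨_, rfl⟩
  have hc0 : 0 < c := by rw [hc]; positivity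
  obtain ⟨n₀, hn₀⟩ := exists_nat_gt (20 / (d * c))
  refine ⟨n₀, d * c ^ 3 / 16, ?_, by positivity, ?_⟩
  · have : (0 : ℝ) < n₀ := lt_trans (by positivity) hn₀
    exact_mod_cast this
  intro n hn ρ hρ hρ₀ H H' h3 hH hsub hdeg x y x' y' hnd hpos hpos'
  have hnR : (n₀ : ℝ) ≤ n := by exact_mod_cast hn
  have hnpos : (0 : ℝ) < n := lt_of_lt_of_le (lt_trans (by positivity) hn₀) hnR
  have hnN : 0 < n := by exact_mod_cast hnpos
  have hdcn : 10 ≤ d * c / 2 * n := by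
    have := hn₀.trans_le hnR
    rw [div_lt_iff₀ (by positivity)] at this
    linarith
  have hcn : 20 ≤ c * n := by
    have : d * (c * n) ≤ 1 * (c * n) := by gcongr
    linarith
  have h3' : ∀ e ∈ H', e.card = 3 := fun e he => h3 e (hsub he)
  have hxy : x ≠ y := by rintro rfl; simp at hnd
  have hxy' : x' ≠ y' := by rintro rfl; simp at hnd
  obtain ⟨S, hS, hSA⟩ := exists_reachable hβ hnN h3' hdeg hxy hpos
  obtain ⟨T, hT, hTA⟩ := exists_reachable hβ hnN h3' hdeg hxy' hpos'
  rw [← hc] at hS hT hSA hTA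
  have hB₁ := card_poor_pairs_le hd hnN hH S _ hSA
  have hB₂ := card_poor_pairs_le hd hnN hH T _ hTA
  set A₁ := fun s => univ.filter fun w => c * n ≤ ((starts n H' x y w s).card : ℝ) with hA₁
  set A₂ := fun s => univ.filter fun w => c * n ≤ ((starts n H' x' y' w s).card : ℝ) with hA₂
  set B₁ := univ.filter fun p : Fin n × Fin n => p.1 ∈ S ∧
      (((A₁ p.1).filter fun v => ({v, p.1, p.2} : Finset (Fin n)) ∈ H).card : ℝ)
        < d * c / 2 * n with hB₁d
  set B₂ := univ.filter fun p : Fin n × Fin n => p.1 ∈ T ∧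
      (((A₂ p.1).filter fun v => ({v, p.1, p.2} : Finset (Fin n)) ∈ H).card : ℝ)
        < d * c / 2 * n with hB₂d
  set F : Finset (Fin n) := {x, y, x', y'} with hF
  have hFc : F.card ≤ 4 := Finset.card_le_four
  have hshrink : ∀ X : Finset (Fin n), c * n ≤ (X.card : ℝ) →
      c * n / 2 ≤ ((X \ F).card : ℝ) := by
    intro X hX
    have h1 : X.card ≤ (X \ F).card + 4 := by
      have := Finset.le_card_sdiff F X
      omega
    have h2 : (X.card : ℝ) ≤ (X \ F).card + 4 := by exact_mod_cast h1
    linarith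
  -- A pair `(v₅, v₆)` in `S × T` off the four given vertices that is poor for neither side.
  obtain ⟨⟨s, t⟩, hst, hgood⟩ : ∃ p ∈ (S \ F) ×ˢ (T \ F), p ∉ B₁ ∪ B₂.image Prod.swap := by
    apply Finset.exists_mem_notMem_of_card_lt_card
    have h1 : ((B₁ ∪ B₂.image Prod.swap).card : ℝ) ≤ B₁.card + B₂.card := by
      exact_mod_cast (Finset.card_union_le _ _).trans
        (Nat.add_le_add_left Finset.card_image_le _)
    have h2 : (c * n / 2) * (c * n / 2) ≤ (((S \ F) ×ˢ (T \ F)).card : ℝ) := by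
      rw [Finset.card_product]
      push_cast
      exact mul_le_mul (hshrink S hS) (hshrink T hT) (by positivity) (by positivity)
    have h3 : (B₁.card + B₂.card : ℝ) * (d * c / 2) < (c * n / 2) * (c * n / 2) * (d * c / 2) := by
      have : ρ * (n : ℝ) ^ 2 < d * c ^ 3 / 16 * (n : ℝ) ^ 2 := by gcongr
      nlinarith
    have h4 := lt_of_mul_lt_mul_right h3 (by positivity)
    exact_mod_cast (h1.trans_lt h4).trans_le h2
  simp only [mem_product, mem_sdiff] at hst
  obtain ⟨⟨hsS, hsF⟩, htT, htF⟩ := hst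
  simp only [mem_union, mem_image, not_or, not_exists, not_and] at hgood
  have hg₁ : d * c / 2 * n ≤
      (((A₁ s).filter fun v => ({v, s, t} : Finset (Fin n)) ∈ H).card : ℝ) := by
    by_contra hlt
    exact hgood.1 (mem_filter.mpr ⟨mem_univ _, hsS, not_le.mp hlt⟩)
  have hg₂ : d * c / 2 * n ≤
      (((A₂ t).filter fun v => ({v, t, s} : Finset (Fin n)) ∈ H).card : ℝ) := by
    by_contra hlt
    exact hgood.2 (t, s) (mem_filter.mpr ⟨mem_univ _, htT, not_le.mp hlt⟩) rfl
  obtain ⟨w, hw, hwF⟩ := exists_fresh _ (insert s (insert t F))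
    (by have := Finset.card_insert_le s (insert t F)
        have := Finset.card_insert_le t F
        omega) hdcn hg₁
  obtain ⟨w', hw', hwF'⟩ := exists_fresh _ (insert w (insert s (insert t F)))
    (by have := Finset.card_insert_le w (insert s (insert t F))
        have := Finset.card_insert_le s (insert t F)
        have := Finset.card_insert_le t F
        omega) hdcn hg₂
  simp only [hA₁, hA₂, mem_filter, mem_univ, true_and] at hw hw'
  obtain ⟨hwA, hwE⟩ := hw
  obtain ⟨hwA', hwE'⟩ := hw'
  obtain ⟨u, hu, huF⟩ := exists_fresh _ (insert w' (insert w (insert s (insert t F))))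
    (by have := Finset.card_insert_le w' (insert w (insert s (insert t F)))
        have := Finset.card_insert_le w (insert s (insert t F))
        have := Finset.card_insert_le s (insert t F)
        have := Finset.card_insert_le t F
        omega) (by linarith : (10 : ℝ) ≤ c * n) hwA
  obtain ⟨u', hu', huF'⟩ := exists_fresh _ (insert u (insert w' (insert w (insert s (insert t F)))))
    (by have := Finset.card_insert_le u (insert w' (insert w (insert s (insert t F))))
        have := Finset.card_insert_le w' (insert w (insert s (insert t F)))
        have := Finset.card_insert_le w (insert s (insert t F))
        have := Finset.card_insert_le s (insert t F)
        have := Finset.card_insert_le t F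
        omega) (by linarith : (10 : ℝ) ≤ c * n) hwA'
  simp only [starts, mem_filter, mem_univ, true_and] at hu hu'
  obtain ⟨e1, e2, e3⟩ := hu
  obtain ⟨e1', e2', e3'⟩ := hu'
  have hne := (ne_of_card_three (h3 _ hwE)).2.2
  -- The second half was built outwards from `(x', y')`, so its edges are listed in reverse.
  rw [triple_comm] at e1' e2' e3' hwE'
  refine ⟨[y, x, u, w, s, t, w', u', x', y'], ⟨?_, ?_⟩, rfl, ⟨by simp, rfl, rfl, rfl, rfl⟩⟩
  · simp only [hF, mem_insert, mem_singleton, not_or] at hsF htF hwF hwF' huF huF'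
    simp only [List.nodup_cons, List.mem_cons, List.not_mem_nil, not_or, or_false] at hnd ⊢
    grind
  · intro i hi
    simp only [List.length_cons, List.length_nil] at hi
    have hi' : i < 8 := by omega
    interval_cases i
    · exact hsub e1
    · exact hsub e2
    · exact hsub e3
    · exact hwE
    · exact hwE'
    · exact hsub e3'
    · exact hsub e2'
    · exact hsub e1'
end

section
/- For every d, ζ ∈ (0,1], there exist an integer n₀, a real ρ₀ > 0, and an integer l₀ such that the following holds for all n ≥ n₀ and 0 < ρ < ρ₀: if H is an n-vertex (ρ,d)-cherry-dense 3-graph, then all but at most ζn vertices of H can be covered by at most l₀ pairwise vertex-disjoint tight paths in H. -/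
/-! Only the density of `H` on large vertex sets is needed. Applying cherry-density to
`G₁ = G₂ = U × U` shows that every vertex set `U` with more than `ζn` vertices spans at least
`c n³` edges, where `c = dζ³/54` (`dense_on`).

A 3-graph with more than `k` times as many edges as pairs in its shadow has a nonempty subgraph in
which every shadow pair has codegree above `k` (`exists_core`): repeatedly delete all edges through
a pair of codegree at most `k`. In such a subgraph a tight path can be extended greedily until it
has more than `k` vertices (`exists_path_of_core`). With `k = ⌊cn/2⌋` this gives a tight path with
more than `cn/2` vertices inside every `U` as above (`exists_long_path`).

Removing such paths one after another, the uncovered set drops to at most `ζn` vertices after at most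
`⌈2/c⌉` steps (`greedy_cover`). -/

open Finset

/-- Deleting all members through a shadow set of degree at most `k` costs at most `k` members and
shrinks the shadow by at least one, so the inequality `h` survives each deletion. -/
theorem exists_core {n : ℕ} (k : ℕ) (F : Finset (Finset (Fin n)))
    (h : k * F.shadow.card < F.card) :
    ∃ F' ⊆ F, F'.Nonempty ∧ ∀ S ∈ F'.shadow, k < pairDeg n F' S := by
  induction F using Finset.strongInduction with
  | H F ih =>
    by_cases hall : ∀ S ∈ F.shadow, k < pairDeg n F S
    · exact ⟨F, Subset.rfl, Finset.card_pos.1 (by omega), hall⟩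
    push Not at hall
    obtain ⟨S, hS, hdeg⟩ := hall
    unfold pairDeg at hdeg
    have hsplit := Finset.card_filter_add_card_filter_not (s := F) (fun e => S ⊆ e)
    have hsub : F.filter (fun e => ¬ S ⊆ e) ⊆ F := Finset.filter_subset _ _
    have hssub : F.filter (fun e => ¬ S ⊆ e) ⊂ F := by
      refine hsub.ssubset_of_ne fun heq => ?_
      obtain ⟨e, he, a, ha, rfl⟩ := Finset.mem_shadow_iff.1 hS
      rw [← heq] at he
      exact (Finset.mem_filter.1 he).2 (Finset.erase_subset _ _)
    have hsh : (F.filter (fun e => ¬ S ⊆ e)).shadow ⊆ F.shadow.erase S := by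
      intro T hT
      refine Finset.mem_erase.2 ⟨?_, Finset.shadow_monotone hsub hT⟩
      rintro rfl
      obtain ⟨e, he, a, ha, rfl⟩ := Finset.mem_shadow_iff.1 hT
      exact (Finset.mem_filter.1 he).2 (Finset.erase_subset _ _)
    have hc := Finset.card_le_card hsh
    have hc2 := Finset.card_erase_add_one hS
    have hlt : k * (F.filter (fun e => ¬ S ⊆ e)).shadow.card
        < (F.filter (fun e => ¬ S ⊆ e)).card := by
      have h1 := Nat.mul_le_mul_left k hc
      have h2 : k * (F.shadow.erase S).card + k = k * F.shadow.card := by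
        rw [← hc2]; ring
      omega
    obtain ⟨F', hF', hne, hF''⟩ := ih _ hssub hlt
    exact ⟨F', hF'.trans hsub, hne, hF''⟩

theorem isTightPath_cons {n : ℕ} {H : Finset (Finset (Fin n))} {z a b : Fin n} {L : List (Fin n)}
    (hp : IsTightPath n H (a :: b :: L)) (hz : z ∉ a :: b :: L)
    (he : ({z, a, b} : Finset (Fin n)) ∈ H) : IsTightPath n H (z :: a :: b :: L) := by
  refine ⟨List.nodup_cons.2 ⟨hz, hp.1⟩, ?_⟩
  rintro (_ | i) h
  · simpa using he
  · exact hp.2 i (by simpa using h)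

/-- Greedy extension at the front of a path: only the vertices other than the two leading ones can
block an extension. -/
theorem exists_path_of_core {n : ℕ} {H F : Finset (Finset (Fin n))} {U : Finset (Fin n)} {k : ℕ}
    (hFH : F ⊆ H) (h3 : ∀ e ∈ F, e.card = 3) (hU : ∀ e ∈ F, e ⊆ U) (hne : F.Nonempty)
    (hdeg : ∀ S ∈ F.shadow, k < pairDeg n F S) (m : ℕ) (hm : m ≤ k + 1) :
    ∃ a b L, L.length = m ∧ IsTightPath n H (a :: b :: L) ∧ (∀ x ∈ a :: b :: L, x ∈ U) ∧
      ({a, b} : Finset (Fin n)) ∈ F.shadow := by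
  induction m with
  | zero =>
    obtain ⟨e, he⟩ := hne
    obtain ⟨a, b, c, hab, hac, hbc, rfl⟩ := Finset.card_eq_three.1 (h3 e he)
    have hs := hU _ he
    refine ⟨a, b, [], rfl, ⟨by simpa using hab, fun i h => absurd h (by simp)⟩, ?_, ?_⟩
    · intro x hx
      apply hs
      simp only [List.mem_cons, List.not_mem_nil, or_false] at hx
      rcases hx with rfl | rfl <;> simp
    · refine Finset.mem_shadow_iff.2 ⟨_, he, c, by simp, ?_⟩
      ext x
      simp only [Finset.mem_erase, Finset.mem_insert, Finset.mem_singleton]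
      grind
  | succ m ih =>
    obtain ⟨a, b, L, hL, hp, hLU, hsh⟩ := ih (by omega)
    have hab : a ≠ b := by
      have := hp.1
      simp only [List.nodup_cons, List.mem_cons] at this
      tauto
    have hd := hdeg _ hsh
    unfold pairDeg at hd
    have hblock : (L.toFinset.image (fun z => insert z ({a, b} : Finset (Fin n)))).card
        < (F.filter (fun e => {a, b} ⊆ e)).card := by
      have h1 := Finset.card_image_le (s := L.toFinset)
        (f := fun z => insert z ({a, b} : Finset (Fin n)))
      have h2 := L.toFinset_card_le
      omega
    obtain ⟨e, he, hnot⟩ := Finset.exists_mem_notMem_of_card_lt_card hblock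
    obtain ⟨heF, hsub⟩ := Finset.mem_filter.1 he
    have hcard : (e \ {a, b}).card = 1 := by
      rw [Finset.card_sdiff_of_subset hsub, h3 e heF, Finset.card_pair hab]
    obtain ⟨z, hz⟩ := Finset.card_eq_one.1 hcard
    have hzm : z ∈ e \ {a, b} := by rw [hz]; simp
    have hez : e = {z, a, b} := by
      rw [← Finset.sdiff_union_of_subset hsub, hz]; rfl
    subst hez
    have hzab : z ≠ a ∧ z ≠ b := by
      simp only [Finset.mem_sdiff, Finset.mem_insert, Finset.mem_singleton] at hzm
      tauto
    have hzL : z ∉ L := fun h =>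
      hnot (Finset.mem_image.2 ⟨z, List.mem_toFinset.2 h, rfl⟩)
    refine ⟨z, a, b :: L, by simp [hL], isTightPath_cons hp ?_ (hFH heF), ?_, ?_⟩
    · simp only [List.mem_cons]; tauto
    · intro x hx
      rcases List.mem_cons.1 hx with rfl | hx
      · exact hU _ heF (by simp)
      · exact hLU x hx
    · refine Finset.mem_shadow_iff.2 ⟨_, heF, b, by simp, ?_⟩
      ext x
      simp only [Finset.mem_erase, Finset.mem_insert, Finset.mem_singleton]
      grind

/-- Cherry-density with `G₁ = G₂ = U × U`; each edge comes from at most `27` ordered triples. -/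
theorem dense_on {n : ℕ} {H : Finset (Finset (Fin n))} {ρ d : ℝ} (hH : CherryDense n H ρ d)
    (U : Finset (Fin n)) :
    d * (U.card : ℝ) ^ 3 - ρ * (n : ℝ) ^ 3 ≤ 27 * ((H.filter fun e => e ⊆ U).card : ℝ) := by
  have h := hH (U ×ˢ U) (U ×ˢ U)
  have hP : ((Finset.univ : Finset (Fin n × Fin n × Fin n)).filter fun t =>
      (t.1, t.2.1) ∈ U ×ˢ U ∧ (t.2.1, t.2.2) ∈ U ×ˢ U) = U ×ˢ (U ×ˢ U) := by
    ext ⟨x, y, z⟩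
    simp only [Finset.mem_filter, Finset.mem_univ, true_and, Finset.mem_product]
    tauto
  rw [hP] at h
  have hmaps : ∀ t ∈ (U ×ˢ (U ×ˢ U)).filter
      (fun t => ({t.1, t.2.1, t.2.2} : Finset (Fin n)) ∈ H),
      ({t.1, t.2.1, t.2.2} : Finset (Fin n)) ∈ H.filter fun e => e ⊆ U := by
    rintro ⟨x, y, z⟩ ht
    simp only [Finset.mem_filter, Finset.mem_product] at ht ⊢
    refine ⟨ht.2, ?_⟩
    simp only [Finset.insert_subset_iff, Finset.singleton_subset_iff]
    tauto
  have hfib : ∀ e ∈ H.filter (fun e => e ⊆ U),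
      (((U ×ˢ (U ×ˢ U)).filter (fun t => ({t.1, t.2.1, t.2.2} : Finset (Fin n)) ∈ H)).filter
        (fun t => ({t.1, t.2.1, t.2.2} : Finset (Fin n)) = e)).card ≤ 27 := by
    intro e _
    by_cases hc : e.card ≤ 3
    · calc _ ≤ (e ×ˢ (e ×ˢ e)).card := by
            apply Finset.card_le_card
            rintro ⟨x, y, z⟩ ht
            obtain rfl := (Finset.mem_filter.1 ht).2
            simp
        _ = e.card * (e.card * e.card) := by simp only [Finset.card_product]
        _ ≤ 3 * (3 * 3) := by gcongr
        _ = 27 := by norm_num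
    · rw [Finset.filter_eq_empty_iff.2]
      · simp
      · rintro t _ rfl
        exact hc Finset.card_le_three
  have hcount := Finset.card_le_mul_card_image_of_maps_to hmaps 27 hfib
  have hcount' : ((((U ×ˢ (U ×ˢ U)).filter
      (fun t => ({t.1, t.2.1, t.2.2} : Finset (Fin n)) ∈ H)).card : ℕ) : ℝ)
      ≤ 27 * ((H.filter fun e => e ⊆ U).card : ℝ) := by exact_mod_cast hcount
  have hU3 : (((U ×ˢ (U ×ˢ U)).card : ℕ) : ℝ) = (U.card : ℝ) ^ 3 := by
    simp only [Finset.card_product]; push_cast; ring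
  rw [hU3] at h
  linarith

/-- A set `U` of more than `ζn` vertices contains a tight path on at least `cn/2` vertices, where
`c/2 = dζ³/108`. -/
theorem exists_long_path {n : ℕ} {H : Finset (Finset (Fin n))} {ρ d ζ : ℝ} (hd : 0 < d)
    (hζ : 0 < ζ) (hρ : ρ < d * ζ ^ 3 / 2) (h3 : ∀ e ∈ H, e.card = 3) (hH : CherryDense n H ρ d)
    (U : Finset (Fin n)) (hU : ζ * (n : ℝ) < U.card) :
    ∃ L : List (Fin n), IsTightPath n H L ∧ (∀ x ∈ L, x ∈ U) ∧
      d * ζ ^ 3 / 108 * (n : ℝ) ≤ L.length := by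
  have hn : 0 < n := by
    rcases Nat.eq_zero_or_pos n with rfl | h
    · have := U.card_le_univ
      simp only [Fintype.card_fin] at this
      have h0 : U.card = 0 := by omega
      simp [h0] at hU
    · exact h
  have hnR : (0 : ℝ) < n := by exact_mod_cast hn
  have hn3 : (0 : ℝ) < (n : ℝ) ^ 3 := by positivity
  have hc : 0 < d * ζ ^ 3 := by positivity
  set k := ⌊d * ζ ^ 3 / 108 * (n : ℝ)⌋₊ with hk
  have hk1 : (k : ℝ) ≤ d * ζ ^ 3 / 108 * (n : ℝ) := Nat.floor_le (by positivity)
  have hk2 : d * ζ ^ 3 / 108 * (n : ℝ) < k + 1 := Nat.lt_floor_add_one _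
  set F := H.filter fun e => e ⊆ U with hF
  have hFc := dense_on hH U
  have hU3 : ζ ^ 3 * (n : ℝ) ^ 3 ≤ (U.card : ℝ) ^ 3 := by
    rw [← mul_pow]
    exact pow_le_pow_left₀ (by positivity) hU.le 3
  have hshadow : F.shadow.card ≤ n ^ 2 := by
    have hsub : F.shadow ⊆ Finset.powersetCard 2 Finset.univ := by
      intro T hT
      obtain ⟨e, he, a, ha, rfl⟩ := Finset.mem_shadow_iff.1 hT
      refine Finset.mem_powersetCard.2 ⟨Finset.subset_univ _, ?_⟩
      rw [Finset.card_erase_of_mem ha, h3 e (Finset.mem_filter.1 he).1]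
    have h1 := Finset.card_le_card hsub
    rw [Finset.card_powersetCard, Finset.card_univ, Fintype.card_fin] at h1
    exact h1.trans (Nat.choose_le_pow n 2)
  have hbig : k * F.shadow.card < F.card := by
    have h1 : (k : ℝ) * (n : ℝ) ^ 2 < F.card := by
      have h2 : (k : ℝ) * (n : ℝ) ^ 2 ≤ d * ζ ^ 3 / 108 * (n : ℝ) ^ 3 := by
        calc (k : ℝ) * (n : ℝ) ^ 2 ≤ d * ζ ^ 3 / 108 * (n : ℝ) * (n : ℝ) ^ 2 := by gcongr
          _ = _ := by ring
      have h4 : d * (ζ ^ 3 * (n : ℝ) ^ 3) ≤ d * (U.card : ℝ) ^ 3 := by gcongr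
      have h5 : ρ * (n : ℝ) ^ 3 < d * ζ ^ 3 / 2 * (n : ℝ) ^ 3 := by gcongr
      have h6 : 0 < d * ζ ^ 3 * (n : ℝ) ^ 3 := by positivity
      linarith
    have h1' : k * n ^ 2 < F.card := by exact_mod_cast h1
    exact (Nat.mul_le_mul_left k hshadow).trans_lt h1'
  obtain ⟨F', hF', hne, hdeg⟩ := exists_core k F hbig
  have hF'H : F' ⊆ H := hF'.trans (Finset.filter_subset _ _)
  obtain ⟨a, b, L, hL, hp, hLU, -⟩ := exists_path_of_core (U := U) hF'H
    (fun e he => h3 e (hF'H he)) (fun e he => (Finset.mem_filter.1 (hF' he)).2) hne hdeg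
    (k + 1) le_rfl
  refine ⟨_, hp, hLU, ?_⟩
  simp only [List.length_cons, hL]
  push_cast
  linarith

/-- After `j` greedy steps either at most `t` vertices are left, or at least `j * s` have been
covered. -/
theorem greedy_cover {n : ℕ} {H : Finset (Finset (Fin n))} {s t : ℝ}
    (hlong : ∀ U : Finset (Fin n), t < U.card →
      ∃ L : List (Fin n), IsTightPath n H L ∧ (∀ x ∈ L, x ∈ U) ∧ s ≤ L.length) (j : ℕ) :
    ∃ (l : ℕ) (P : Fin l → List (Fin n)), l ≤ j ∧ (∀ i, IsTightPath n H (P i)) ∧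
      (∀ i j, i ≠ j → ∀ x ∈ P i, x ∉ P j) ∧
      ((((Finset.univ : Finset (Fin n)).filter fun v => ∀ i, v ∉ P i).card : ℝ) ≤ t ∨
        (((Finset.univ : Finset (Fin n)).filter fun v => ∀ i, v ∉ P i).card : ℝ) + j * s ≤ n) := by
  induction j with
  | zero =>
    refine ⟨0, fun i => i.elim0, le_rfl, fun i => i.elim0, fun i => i.elim0, Or.inr ?_⟩
    simp
  | succ j ih =>
    obtain ⟨l, P, hl, hP, hdis, hcov⟩ := ih
    by_cases ht : (((Finset.univ : Finset (Fin n)).filter fun v => ∀ i, v ∉ P i).card : ℝ) ≤ t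
    · exact ⟨l, P, by omega, hP, hdis, Or.inl ht⟩
    replace hcov := hcov.resolve_left ht
    obtain ⟨L, hL, hLU, hlen⟩ := hlong _ (not_le.1 ht)
    have hLP : ∀ x ∈ L, ∀ i, x ∉ P i := fun x hx => (Finset.mem_filter.1 (hLU x hx)).2
    refine ⟨l + 1, Fin.cons L P, by omega, ?_, ?_, Or.inr ?_⟩
    · intro i
      refine Fin.cases ?_ (fun i => ?_) i
      · simpa using hL
      · simpa using hP i
    · intro i i'
      refine Fin.cases ?_ (fun i => ?_) i <;> refine Fin.cases ?_ (fun i' => ?_) i'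
      · simp
      · intro _ x hx
        simpa using hLP x (by simpa using hx) i'
      · intro _ x hx hx'
        exact hLP x (by simpa using hx') i (by simpa using hx)
      · intro hii x hx
        simpa using hdis i i' (fun h => hii (by rw [h])) x (by simpa using hx)
    · have hset : ((Finset.univ : Finset (Fin n)).filter fun v =>
          ∀ i, v ∉ (Fin.cons L P : Fin (l + 1) → List (Fin n)) i) =
          ((Finset.univ : Finset (Fin n)).filter fun v => ∀ i, v ∉ P i) \ L.toFinset := by
        ext v
        simp only [Finset.mem_filter, Finset.mem_univ, true_and, Finset.mem_sdiff,
          List.mem_toFinset, Fin.forall_fin_succ, Fin.cons_zero, Fin.cons_succ]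
        tauto
      have hsub : L.toFinset ⊆ (Finset.univ : Finset (Fin n)).filter fun v => ∀ i, v ∉ P i :=
        fun x hx => hLU x (List.mem_toFinset.1 hx)
      have hc := Finset.card_sdiff_add_card_eq_card hsub
      rw [List.toFinset_card_of_nodup hL.1, ← hset] at hc
      have hc' : (((Finset.univ : Finset (Fin n)).filter fun v =>
          ∀ i, v ∉ (Fin.cons L P : Fin (l + 1) → List (Fin n)) i).card : ℝ) + L.length =
          ((Finset.univ : Finset (Fin n)).filter fun v => ∀ i, v ∉ P i).card := by
        exact_mod_cast hc
      push_cast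
      linarith

/-- Path-cover lemma: for every `d, ζ ∈ (0,1]` there exist `n₀`, `ρ₀ > 0` and `l₀` such
that for all `n ≥ n₀` and `0 < ρ < ρ₀`: in every `n`-vertex `(ρ,d)`-cherry-dense
3-graph `H`, all but at most `ζn` vertices can be covered by at most `l₀` pairwise
vertex-disjoint tight paths. -/
theorem stmt_8 (d ζ : ℝ) (hd : 0 < d) (hd1 : d ≤ 1) (hζ : 0 < ζ) (hζ1 : ζ ≤ 1) :
    ∃ (n₀ : ℕ) (ρ₀ : ℝ) (l₀ : ℕ), 0 < ρ₀ ∧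
      ∀ n : ℕ, n₀ ≤ n → ∀ ρ : ℝ, 0 < ρ → ρ < ρ₀ →
        ∀ H : Finset (Finset (Fin n)),
          (∀ e ∈ H, e.card = 3) →
          CherryDense n H ρ d →
          ∃ (l : ℕ) (P : Fin l → List (Fin n)),
            l ≤ l₀ ∧
            (∀ i, IsTightPath n H (P i)) ∧
            (∀ i j, i ≠ j → ∀ x ∈ P i, x ∉ P j) ∧
            ((((Finset.univ : Finset (Fin n)).filter fun v =>
                ∀ i, v ∉ P i).card : ℝ) ≤ ζ * (n : ℝ)) := by
  have hc : 0 < d * ζ ^ 3 / 108 := by positivity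
  refine ⟨0, d * ζ ^ 3 / 2, ⌈1 / (d * ζ ^ 3 / 108)⌉₊, by positivity, ?_⟩
  intro n _ ρ _ hρ H h3 hH
  obtain ⟨l, P, hl, hP, hdis, hcov⟩ := greedy_cover (fun U hU =>
    exists_long_path hd hζ hρ h3 hH U hU) ⌈1 / (d * ζ ^ 3 / 108)⌉₊
  refine ⟨l, P, hl, hP, hdis, ?_⟩
  rcases hcov with h | h
  · exact h
  -- The paths already account for all `n` vertices, so nothing is left uncovered.
  have h1 : 1 ≤ (⌈1 / (d * ζ ^ 3 / 108)⌉₊ : ℝ) * (d * ζ ^ 3 / 108) :=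
    (div_le_iff₀ hc).1 (Nat.le_ceil _)
  have hn : (0 : ℝ) ≤ n := Nat.cast_nonneg n
  have h2 := mul_le_mul_of_nonneg_right h1 hn
  have h4 : 0 ≤ ζ * (n : ℝ) := by positivity
  nlinarith
end

section
/- Let d > 0, ρ > 0, and let H be an n-vertex (ρ,d)-cherry-dense 3-graph. Then the number of unordered pairs S of distinct vertices with deg_H(S) < d(n−2)/2 is at most (2ρ/d)·C(n,2). -/
/-!
Let `G` be the set of ordered pairs of distinct vertices whose codegree is below `d(n-2)/2`; it has
(at least) twice as many elements as there are deficient unordered pairs. Cherry-density is applied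
to `G` and the set of all ordered pairs. There are `|G| n` cherries, and an ordered pair of `G`
extends to at most as many edge-cherries as its codegree (`card_cherries_le`), so
`d |G| n - ρ n³ ≤ |G| d (n-2)/2`, that is, `d |G| (n+2)/2 ≤ ρ n³`. The claim follows since
`n² ≤ (n+2)(n-1)` for `n ≥ 2`, while for `n ≤ 1` there are no pairs at all.
-/

open Finset

/-- The third vertex of an edge is determined by the edge and the other two vertices. -/
lemma third_eq {n : ℕ} {x y z w : Fin n} (h3 : ({x, y, z} : Finset (Fin n)).card = 3)
    (h : ({x, y, z} : Finset (Fin n)) = {x, y, w}) : z = w := by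
  have hz : z ∈ ({x, y, w} : Finset (Fin n)) := by rw [← h]; simp
  simp only [mem_insert, mem_singleton] at hz
  have h2 : ∀ a b : Fin n, ({a, b} : Finset (Fin n)).card ≤ 2 := fun a b => card_le_two
  rcases hz with rfl | rfl | rfl
  · have := h2 z y
    rw [show ({z, y, z} : Finset (Fin n)) = {z, y} by ext; simp; tauto] at h3
    omega
  · have := h2 x z
    rw [show ({x, z, z} : Finset (Fin n)) = {x, z} by ext; simp] at h3
    omega
  · rfl

lemma card_third_le {n : ℕ} {H : Finset (Finset (Fin n))} (h3 : ∀ e ∈ H, e.card = 3)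
    (x y : Fin n) :
    ((univ : Finset (Fin n)).filter fun z => ({x, y, z} : Finset (Fin n)) ∈ H).card
      ≤ pairDeg n H {x, y} := by
  unfold pairDeg
  refine card_le_card_of_injOn (fun z => {x, y, z}) ?_ ?_
  · intro z hz
    have hz' : ({x, y, z} : Finset (Fin n)) ∈ H := by simpa using hz
    simp only [coe_filter, Set.mem_ofPred_eq]
    refine ⟨hz', ?_⟩
    intro a ha
    simp only [mem_insert, mem_singleton] at ha ⊢
    tauto
  · intro z hz w _ h
    have hz' : ({x, y, z} : Finset (Fin n)) ∈ H := by simpa using hz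
    exact third_eq (h3 _ hz') h

/-- If all pairs of `G` have codegree at most `c`, at most `|G| c` cherries that start with a pair
of `G` span an edge. -/
lemma card_cherries_le {n : ℕ} {H : Finset (Finset (Fin n))} (h3 : ∀ e ∈ H, e.card = 3)
    (G : Finset (Fin n × Fin n)) (c : ℝ)
    (hG : ∀ p ∈ G, (pairDeg n H {p.1, p.2} : ℝ) ≤ c) :
    ((((univ : Finset (Fin n × Fin n × Fin n)).filter fun t =>
          (t.1, t.2.1) ∈ G ∧ (t.2.1, t.2.2) ∈ (univ : Finset (Fin n × Fin n))).filter fun t =>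
          ({t.1, t.2.1, t.2.2} : Finset (Fin n)) ∈ H).card : ℝ) ≤ G.card * c := by
  rw [card_eq_sum_card_fiberwise (f := fun t => (t.1, t.2.1)) (t := G)
    (by intro t ht; simp at ht; exact ht.1)]
  push_cast
  rw [← nsmul_eq_mul]
  refine sum_le_card_nsmul _ _ _ fun p hp => le_trans ?_ (hG p hp)
  norm_cast
  refine le_trans ?_ (card_third_le h3 p.1 p.2)
  refine card_le_card_of_injOn (fun t => t.2.2) ?_ ?_
  · rintro ⟨a, b, z⟩ ht
    simp at ht
    obtain ⟨⟨_, h⟩, rfl⟩ := ht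
    simpa using h
  · rintro ⟨a, b, z⟩ ht ⟨a', b', z'⟩ ht' h
    simp at ht ht' h
    obtain ⟨_, rfl⟩ := ht
    obtain ⟨_, h2⟩ := ht'
    simp only [Prod.mk.injEq] at h2
    simp [h2.1, h2.2, h]

lemma card_P2_ge {n : ℕ} (G : Finset (Fin n × Fin n)) :
    G.card * n ≤ ((univ : Finset (Fin n × Fin n × Fin n)).filter fun t =>
          (t.1, t.2.1) ∈ G ∧ (t.2.1, t.2.2) ∈ (univ : Finset (Fin n × Fin n))).card := by
  have h : (G ×ˢ (univ : Finset (Fin n))).card = G.card * n := by simp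
  rw [← h]
  refine card_le_card_of_injOn (fun q => (q.1.1, q.1.2, q.2)) ?_ ?_
  · intro q hq
    simpa using hq
  · rintro ⟨⟨a, b⟩, z⟩ _ ⟨⟨a', b'⟩, z'⟩ _ h
    simp only [Prod.mk.injEq] at h
    simp [h.1, h.2.1, h.2.2]

/-- Every two-element set in `B` comes from two ordered pairs. -/
lemma two_mul_card_le {n : ℕ} (B : Finset (Finset (Fin n))) (hB : ∀ S ∈ B, S.card = 2) :
    2 * B.card ≤
      ((univ : Finset (Fin n × Fin n)).filter fun p => ({p.1, p.2} : Finset (Fin n)) ∈ B).card := by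
  rw [card_eq_sum_card_fiberwise (f := fun p : Fin n × Fin n => ({p.1, p.2} : Finset (Fin n))) (t := B)
    (by intro t ht; simpa using ht), mul_comm, ← smul_eq_mul]
  refine card_nsmul_le_sum _ _ _ fun S hS => ?_
  obtain ⟨x, y, hxy, rfl⟩ := card_eq_two.mp (hB S hS)
  rw [← card_pair (show (x, y) ≠ (y, x) by simp [hxy])]
  refine card_le_card ?_
  intro p hp
  simp only [mem_insert, mem_singleton] at hp
  rcases hp with rfl | rfl
  · simpa using hS
  · simpa [pair_comm y x] using hS

/-- In an `n`-vertex `(ρ,d)`-cherry-dense 3-graph, the number of (unordered) pairs `S`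
of distinct vertices with `deg_H(S) < d(n−2)/2` is at most `(2ρ/d)·C(n,2)`. -/
theorem stmt_10 (d ρ : ℝ) (hd : 0 < d) (hρ : 0 < ρ)
    (n : ℕ) (H : Finset (Finset (Fin n))) (h3 : ∀ e ∈ H, e.card = 3)
    (hH : CherryDense n H ρ d) :
    ((((Finset.univ : Finset (Fin n)).powersetCard 2).filter fun S =>
        (pairDeg n H S : ℝ) < d * ((n : ℝ) - 2) / 2).card : ℝ) ≤
      2 * ρ / d * (n.choose 2 : ℝ) := by
  set B := ((univ : Finset (Fin n)).powersetCard 2).filter fun S =>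
        (pairDeg n H S : ℝ) < d * ((n : ℝ) - 2) / 2 with hBdef
  have hB2 : ∀ S ∈ B, S.card = 2 := fun S hS => (mem_powersetCard.mp (mem_filter.mp hS).1).2
  rcases Nat.lt_or_ge n 2 with hn | hn
  · have h0 : B = ∅ := by
      refine eq_empty_of_forall_notMem fun S hS => ?_
      have h1 := card_le_univ S
      rw [hB2 S hS, Fintype.card_fin] at h1
      omega
    rw [h0, card_empty, Nat.cast_zero]
    positivity
  set G := (univ : Finset (Fin n × Fin n)).filter fun p => ({p.1, p.2} : Finset (Fin n)) ∈ B
    with hG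
  have hBG : (2 : ℝ) * B.card ≤ G.card := mod_cast two_mul_card_le B hB2
  have hup := card_cherries_le h3 G (d * ((n : ℝ) - 2) / 2) fun p hp =>
    (mem_filter.mp (mem_filter.mp hp).2).2.le
  have hlow := (Nat.cast_le (α := ℝ)).mpr (card_P2_ge G)
  rw [Nat.cast_mul] at hlow
  have hch := hH G univ
  have hn' : (2 : ℝ) ≤ n := mod_cast hn
  have key : d * (G.card * n) - ρ * (n : ℝ) ^ 3 ≤ G.card * (d * ((n : ℝ) - 2) / 2) := by
    have := mul_le_mul_of_nonneg_left hlow hd.le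
    linarith
  have key2 : d * B.card * (n + 2) ≤ ρ * (n : ℝ) ^ 3 := by
    have := mul_le_mul_of_nonneg_left hBG (show 0 ≤ d * ((n : ℝ) + 2) / 2 by positivity)
    linarith
  have key3 : ρ * (n : ℝ) ^ 3 ≤ ρ * (n * (n - 1)) * (n + 2) := by
    have h := mul_le_mul_of_nonneg_left (show (n : ℝ) ^ 2 ≤ (n - 1) * (n + 2) by nlinarith)
      (show 0 ≤ ρ * (n : ℝ) by positivity)
    linarith
  have key4 : d * B.card ≤ ρ * (n * (n - 1)) :=
    le_of_mul_le_mul_right (key2.trans key3) (by positivity)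
  rw [Nat.cast_choose_two, show 2 * ρ / d * ((n : ℝ) * (n - 1) / 2) = ρ * (n * (n - 1)) / d by ring,
    le_div_iff₀ hd]
  linarith
end

section
/- For every α, d, σ ∈ (0,1], the following holds for any sufficiently large integer n. Let H be an n-vertex 3-graph with δ₁(H) ≥ α·C(n,2), and let H' be a spanning subgraph of H such that for every pair of distinct vertices x, y, either deg_{H'}(xy) ≥ dn/3 or deg_{H'}(xy) = 0. Then there exists a set A ⊆ V(H) satisfying: (i) σn/2 ≤ |A| ≤ 2σn; (ii) deg_H(v, A) ≥ (σ²/2)·deg_H(v) for every v ∈ V(H); and (iii) for every pair of distinct vertices x, y, either deg_{H'}(xy, A) ≥ (σ/2)·deg_{H'}(xy) or deg_{H'}(xy) = 0. -/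
/-!
Choose `A` by putting each vertex in it independently with probability `σ`. The probabilistic
input is `exists_discrepancy_le`: if a family of at most `exp (ε² n / 4)` weight functions
`w : V → [-1, 1]` is given, some `A` satisfies `∑_{A} w ≤ σ ∑_{V} w + ε n` for all of them
simultaneously. This is Hoeffding's inequality plus a union bound, carried out as an average of
exponential moments over all subsets of `V`.

It is applied to `O(n²)` weights: the constants `±1` (size of `A`), the negated indicators of the
neighbourhoods `N_H(x,y)` and `N_{H'}(x,y)`, and the negated normalised codegrees
`y ↦ -deg_H(vy)/n`. With `ε` small, the first two kinds give (i) and (iii) at once. For (ii), the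
degree of `v` into `A` is a sum of codegrees, so that two linear estimates replace the concentration
of a quadratic statistic:
`2 deg_H(v,A) = ∑_{y ∈ A} deg_H(vy,A) ≥ ∑_{y ∈ A} (σ deg_H(vy) - ε n) ≥ 2σ² deg_H(v) - 2 ε n²`,
and the error is at most `σ² deg_H(v)` because `deg_H(v) ≥ α C(n,2)`.
-/

open Finset

/-- The number of edges `{v,a,b}` of `H` with `a, b ∈ A`. -/
def vdegIn (n : ℕ) (H : Finset (Finset (Fin n))) (v : Fin n) (A : Finset (Fin n)) : ℕ :=
  (H.filter fun e => v ∈ e ∧ e \ {v} ⊆ A).card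

/-- The number of vertices `z ∈ A` with `{x,y,z} ∈ E(H)`. -/
def codegIn (n : ℕ) (H : Finset (Finset (Fin n))) (x y : Fin n) (A : Finset (Fin n)) : ℕ :=
  (A.filter fun z => ({x, y, z} : Finset (Fin n)) ∈ H).card

/-! ### Hoeffding bound for a random subset -/

/-- The centred Bernoulli(`σ`) variable scaled by `x` has exponential moment at most `exp (t²)`
whenever `|x| ≤ t ≤ 1`. -/
lemma bernoulli_mgf_le {σ x t : ℝ} (h0 : 0 ≤ σ) (h1 : σ ≤ 1) (hx : |x| ≤ t) (ht : t ≤ 1) :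
    σ * Real.exp (x * (1 - σ)) + (1 - σ) * Real.exp (-(x * σ)) ≤ Real.exp (t ^ 2) := by
  have hx1 : |x| ≤ 1 := hx.trans ht
  have key : ∀ y : ℝ, |y| ≤ 1 → Real.exp y ≤ 1 + y + y ^ 2 := fun y hy => by
    have := (abs_le.1 (Real.abs_exp_sub_one_sub_id_le hy)).2
    linarith
  have ha : |x * (1 - σ)| ≤ 1 := by
    rw [abs_mul, abs_of_nonneg (by linarith : 0 ≤ 1 - σ)]
    nlinarith [abs_nonneg x]
  have hb : |-(x * σ)| ≤ 1 := by
    rw [abs_neg, abs_mul, abs_of_nonneg h0]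
    nlinarith [abs_nonneg x]
  have hsq : x ^ 2 ≤ t ^ 2 := by
    rw [← sq_abs x]
    exact pow_le_pow_left₀ (abs_nonneg x) hx 2
  have e1 := mul_le_mul_of_nonneg_left (key _ ha) h0
  have e2 := mul_le_mul_of_nonneg_left (key _ hb) (by linarith : 0 ≤ 1 - σ)
  have hv : σ * (1 - σ) ≤ 1 := by nlinarith
  have hv2 : x ^ 2 * (σ * (1 - σ)) ≤ x ^ 2 * 1 := mul_le_mul_of_nonneg_left hv (sq_nonneg x)
  have e3 := Real.add_one_le_exp (t ^ 2)
  nlinarith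

/-- Averaged over `σ`-random subsets `A`, the exponential moment of `∑_A w - σ ∑ w` factorises and
is at most `exp (t² n)`. -/
lemma sum_prob_mul_exp_le {n : ℕ} {σ t : ℝ} (h0 : 0 ≤ σ) (h1 : σ ≤ 1) (ht0 : 0 ≤ t) (ht : t ≤ 1)
    (w : Fin n → ℝ) (hw : ∀ i, |w i| ≤ 1) :
    ∑ A : Finset (Fin n), (σ ^ A.card * (1 - σ) ^ (univ \ A).card) *
      Real.exp (t * (∑ i ∈ A, w i - σ * ∑ i, w i)) ≤ Real.exp (t ^ 2 * n) := by
  have hprod : ∏ i : Fin n, (σ * Real.exp (t * w i * (1 - σ)) +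
      (1 - σ) * Real.exp (-(t * w i * σ))) ≤ Real.exp (t ^ 2 * n) := by
    calc _ ≤ ∏ _i : Fin n, Real.exp (t ^ 2) := by
          refine prod_le_prod (fun i _ => ?_) (fun i _ => ?_)
          · have : 0 ≤ 1 - σ := by linarith
            positivity
          · refine bernoulli_mgf_le h0 h1 ?_ ht
            rw [abs_mul, abs_of_nonneg ht0]
            nlinarith [hw i]
      _ = _ := by
          rw [prod_const, ← Real.exp_nat_mul, card_univ, Fintype.card_fin, mul_comm]
  refine le_of_eq_of_le ?_ hprod
  rw [prod_add, powerset_univ]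
  refine sum_congr rfl fun A _ => ?_
  rw [prod_mul_distrib, prod_mul_distrib, prod_const, prod_const, ← Real.exp_sum, ← Real.exp_sum,
    mul_mul_mul_comm, ← Real.exp_add]
  congr 2
  have hs : ∑ i, w i = ∑ i ∈ A, w i + ∑ i ∈ univ \ A, w i := by
    rw [add_comm, sum_sdiff (subset_univ A)]
  rw [hs, sum_neg_distrib, ← sum_mul, ← sum_mul, ← mul_sum, ← mul_sum]
  ring

/-- Hoeffding's inequality with a union bound: one set `A` has small upper discrepancy for all
weights of the family. -/
lemma exists_discrepancy_le {n : ℕ} {ι : Type} [Fintype ι] {σ ε : ℝ} (h0 : 0 ≤ σ) (h1 : σ ≤ 1)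
    (hε : 0 < ε) (hε1 : ε ≤ 1) (w : ι → Fin n → ℝ) (hw : ∀ k i, |w k i| ≤ 1)
    (hcard : (Fintype.card ι : ℝ) ≤ Real.exp (ε ^ 2 / 4 * n)) :
    ∃ A : Finset (Fin n), ∀ k, ∑ i ∈ A, w k i ≤ σ * ∑ i, w k i + ε * n := by
  -- `t = ε / 2` maximises the exponent `t ε n - t² n` of the Chernoff bound.
  set t : ℝ := ε / 2 with ht
  set P : Finset (Fin n) → ℝ := fun A => σ ^ A.card * (1 - σ) ^ (univ \ A).card with hP
  set F : Finset (Fin n) → ℝ := fun A =>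
    ∑ k, Real.exp (t * (∑ i ∈ A, w k i - σ * ∑ i, w k i)) with hF
  set M : ℝ := Fintype.card ι * Real.exp (t ^ 2 * n) with hM
  have hP1 : ∑ A, P A = 1 := by
    have := prod_add (fun _ : Fin n => σ) (fun _ => 1 - σ) univ
    simpa [hP, powerset_univ] using this.symm
  have hPnn : ∀ A, 0 ≤ P A := fun A => by
    have : 0 ≤ 1 - σ := by linarith
    positivity
  have hsum : ∑ A, P A * F A ≤ M := by
    calc ∑ A, P A * F A
        = ∑ k, ∑ A, P A * Real.exp (t * (∑ i ∈ A, w k i - σ * ∑ i, w k i)) := by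
          simp only [hF, mul_sum]
          exact sum_comm
      _ ≤ ∑ _k : ι, Real.exp (t ^ 2 * n) :=
          sum_le_sum fun k _ =>
            sum_prob_mul_exp_le h0 h1 (by linarith) (by linarith) (w k) (hw k)
      _ = M := by simp [hM]
  obtain ⟨A, hA⟩ : ∃ A, F A ≤ M := by
    by_contra! hcon
    have hlt : ∑ A, P A * M < ∑ A, P A * F A := by
      refine sum_lt_sum (fun A _ => mul_le_mul_of_nonneg_left (hcon A).le (hPnn A)) ?_
      by_contra! hz
      have hz0 : ∀ A, P A = 0 := fun A => by
        by_contra hne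
        have hpos : 0 < P A := lt_of_le_of_ne (hPnn A) (Ne.symm hne)
        exact absurd (hz A (mem_univ _)) (not_le.2 (mul_lt_mul_of_pos_left (hcon A) hpos))
      simp [hz0] at hP1
    rw [← sum_mul, hP1, one_mul] at hlt
    linarith
  refine ⟨A, fun k => ?_⟩
  have hk : Real.exp (t * (∑ i ∈ A, w k i - σ * ∑ i, w k i)) ≤ M :=
    (single_le_sum (f := fun k => Real.exp (t * (∑ i ∈ A, w k i - σ * ∑ i, w k i)))
      (fun _ _ => (Real.exp_pos _).le) (mem_univ k)).trans hA
  have hM2 : M ≤ Real.exp (t * (ε * n)) := by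
    calc M ≤ Real.exp (ε ^ 2 / 4 * n) * Real.exp (t ^ 2 * n) :=
          mul_le_mul_of_nonneg_right hcard (Real.exp_pos _).le
      _ = _ := by
          rw [← Real.exp_add, ht]
          ring_nf
  have := le_of_mul_le_mul_left (Real.exp_le_exp.1 (hk.trans hM2)) (by positivity : 0 < t)
  linarith

/-! ### Double counting of degrees and codegrees -/

/-- As all edges have three distinct vertices, `z ↦ {x, y, z}` is a bijection from the neighbourhood
of a pair to the edges containing it. -/
lemma codegIn_univ {n : ℕ} {H : Finset (Finset (Fin n))} (hH : ∀ e ∈ H, e.card = 3)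
    {x y : Fin n} (hxy : x ≠ y) : codegIn n H x y univ = codeg n H x y := by
  have hne : ∀ z, ({x, y, z} : Finset (Fin n)) ∈ H → z ≠ x ∧ z ≠ y := fun z hz => by
    have h3 := hH _ hz
    constructor <;> rintro rfl
    · have : ({z, y, z} : Finset (Fin n)) = {z, y} := by ext; simp; tauto
      rw [this] at h3
      have := card_le_two (a := z) (b := y)
      omega
    · have : ({x, z, z} : Finset (Fin n)) = {x, z} := by ext; simp
      rw [this] at h3
      have := card_le_two (a := x) (b := z)
      omega
  unfold codegIn codeg
  refine card_bij (fun z _ => {x, y, z}) ?_ ?_ ?_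
  · intro z hz
    simp only [mem_filter, mem_univ, true_and] at hz
    simp [hz]
  · intro z hz z' hz' heq
    simp only [mem_filter, mem_univ, true_and] at hz hz'
    have : z ∈ ({x, y, z'} : Finset (Fin n)) := by rw [← heq]; simp
    simpa [(hne z hz).1, (hne z hz).2] using this
  · intro e he
    obtain ⟨heH, hxe, hye⟩ := mem_filter.1 he
    have hsub : ({x, y} : Finset (Fin n)) ⊆ e := by
      intro a ha
      simp only [mem_insert, mem_singleton] at ha
      rcases ha with rfl | rfl <;> assumption
    have hc : (e \ {x, y}).card = 1 := by
      rw [card_sdiff_of_subset hsub, hH e heH, card_pair hxy]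
    obtain ⟨z, hz⟩ := card_eq_one.1 hc
    have he' : ({x, y, z} : Finset (Fin n)) = e := by
      rw [← union_sdiff_of_subset hsub, hz]
      ext; simp
    exact ⟨z, by simp [he', heH], he'⟩

/-- Each edge `{v,a,b}` with `a, b ∈ A` is counted from `a` and from `b`. -/
lemma sum_codegIn {n : ℕ} {H : Finset (Finset (Fin n))} (hH : ∀ e ∈ H, e.card = 3)
    (v : Fin n) (A : Finset (Fin n)) :
    ∑ y ∈ A, codegIn n H v y A = 2 * vdegIn n H v A := by
  have hL : ∑ y ∈ A, codegIn n H v y A =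
      ((A ×ˢ A).filter fun p => ({v, p.1, p.2} : Finset (Fin n)) ∈ H).card := by
    simp only [codegIn, card_filter, sum_product]
  have hne : ∀ y z, ({v, y, z} : Finset (Fin n)) ∈ H → y ≠ v ∧ z ≠ v ∧ y ≠ z := fun y z hz => by
    have h3 := hH _ hz
    refine ⟨?_, ?_, ?_⟩ <;> rintro rfl
    · have := card_le_two (a := y) (b := z)
      simp at h3
      omega
    · have : ({z, y, z} : Finset (Fin n)) = {z, y} := by ext; simp; tauto
      rw [this] at h3
      have := card_le_two (a := z) (b := y)
      omega
    · have := card_le_two (a := v) (b := y)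
      simp at h3
      omega
  rw [hL, card_eq_sum_card_fiberwise (f := fun p => ({v, p.1, p.2} : Finset (Fin n)))
    (t := H.filter fun e => v ∈ e ∧ e \ {v} ⊆ A)]
  · rw [vdegIn, mul_comm, ← smul_eq_mul, ← sum_const]
    refine sum_congr rfl fun e he => ?_
    obtain ⟨heH, hve, heA⟩ := mem_filter.1 he
    have hc : (e \ {v}).card = 2 := by
      rw [card_sdiff_of_subset (singleton_subset_iff.2 hve), hH e heH, card_singleton]
    have hfib : (((A ×ˢ A).filter fun p => ({v, p.1, p.2} : Finset (Fin n)) ∈ H).filter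
        fun p => ({v, p.1, p.2} : Finset (Fin n)) = e) = (e \ {v}).offDiag := by
      ext ⟨y, z⟩
      simp only [mem_filter, mem_product, mem_offDiag, mem_sdiff, mem_singleton]
      constructor
      · rintro ⟨⟨⟨hy, hz⟩, hm⟩, rfl⟩
        have := hne y z hm
        simp [this]
      · rintro ⟨⟨hy, hyv⟩, ⟨hz, hzv⟩, hyz⟩
        have heq : ({v, y, z} : Finset (Fin n)) = e := by
          refine eq_of_subset_of_card_le ?_ ?_
          · intro a ha
            simp only [mem_insert, mem_singleton] at ha
            rcases ha with rfl | rfl | rfl <;> assumption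
          · rw [hH e heH, card_eq_three.2 ⟨v, y, z, Ne.symm hyv, Ne.symm hzv, hyz, rfl⟩]
        exact ⟨⟨⟨heA (by simp [hy, hyv]), heA (by simp [hz, hzv])⟩, heq ▸ heH⟩, heq⟩
    rw [hfib, offDiag_card, hc]
  · rintro ⟨y, z⟩ hp
    simp only [coe_filter, mem_product, Set.mem_ofPred_eq] at hp ⊢
    refine ⟨hp.2, by simp, ?_⟩
    intro a ha
    simp only [mem_sdiff, mem_insert, mem_singleton] at ha
    rcases ha with ⟨rfl | rfl | rfl, h⟩
    · exact absurd rfl h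
    · exact hp.1.1
    · exact hp.1.2

lemma vdegIn_univ (n : ℕ) (H : Finset (Finset (Fin n))) (v : Fin n) :
    vdegIn n H v univ = vdeg n H v := by
  simp [vdegIn, vdeg]

/-! ### Weights -/

/-- The indicator of the neighbourhood of the pair `x, y`. -/
def nbrInd (n : ℕ) (H : Finset (Finset (Fin n))) (x y z : Fin n) : ℝ :=
  if ({x, y, z} : Finset (Fin n)) ∈ H then 1 else 0

lemma sum_nbrInd (n : ℕ) (H : Finset (Finset (Fin n))) (x y : Fin n) (A : Finset (Fin n)) :
    ∑ z ∈ A, nbrInd n H x y z = codegIn n H x y A := by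
  simp [nbrInd, codegIn]

lemma abs_nbrInd_le (n : ℕ) (H : Finset (Finset (Fin n))) (x y z : Fin n) :
    |nbrInd n H x y z| ≤ 1 := by
  unfold nbrInd
  split_ifs <;> simp

lemma codegIn_le (n : ℕ) (H : Finset (Finset (Fin n))) (x y : Fin n) :
    codegIn n H x y univ ≤ n :=
  (card_filter_le _ _).trans (by simp)

/-! ### Choice of the random set -/

/-- For every `α, d, σ ∈ (0,1]` and sufficiently large `n`: given an `n`-vertex 3-graph
`H` with `δ₁(H) ≥ α·C(n,2)` and a spanning subgraph `H'` in which every codegree is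
`≥ dn/3` or `0`, there is a set `A` with (i) `σn/2 ≤ |A| ≤ 2σn`,
(ii) `deg_H(v,A) ≥ (σ²/2)·deg_H(v)` for all `v`, and (iii) for all pairs `x ≠ y`, either
`deg_{H'}(xy,A) ≥ (σ/2)·deg_{H'}(xy)` or `deg_{H'}(xy) = 0`. -/
theorem stmt_11 (α d σ : ℝ) (hα : 0 < α) (hα1 : α ≤ 1) (hd : 0 < d) (hd1 : d ≤ 1)
    (hσ : 0 < σ) (hσ1 : σ ≤ 1) :
    ∃ n₀ : ℕ, ∀ n : ℕ, n₀ ≤ n →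
      ∀ H H' : Finset (Finset (Fin n)),
        (∀ e ∈ H, e.card = 3) →
        (∀ v : Fin n, α * (n.choose 2 : ℝ) ≤ (vdeg n H v : ℝ)) →
        H' ⊆ H →
        (∀ x y : Fin n, x ≠ y →
          d * (n : ℝ) / 3 ≤ (codeg n H' x y : ℝ) ∨ codeg n H' x y = 0) →
        ∃ A : Finset (Fin n),
          (σ * (n : ℝ) / 2 ≤ (A.card : ℝ) ∧ (A.card : ℝ) ≤ 2 * σ * (n : ℝ)) ∧
          (∀ v : Fin n, σ ^ 2 / 2 * (vdeg n H v : ℝ) ≤ (vdegIn n H v A : ℝ)) ∧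
          (∀ x y : Fin n, x ≠ y →
            σ / 2 * (codeg n H' x y : ℝ) ≤ (codegIn n H' x y A : ℝ) ∨
              codeg n H' x y = 0) := by
  -- The three bounds on `ε` are what (i), (ii) and (iii) require, respectively.
  obtain ⟨ε, hε, hεi, hεii, hεiii⟩ : ∃ ε : ℝ, 0 < ε ∧ ε ≤ σ / 2 ∧ ε ≤ σ ^ 2 * α / 8 ∧
      ε ≤ σ * d / 6 :=
    ⟨min (σ / 2) (min (σ ^ 2 * α / 8) (σ * d / 6)), by positivity, min_le_left _ _,
      (min_le_right _ _).trans (min_le_left _ _), (min_le_right _ _).trans (min_le_right _ _)⟩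
  set c : ℝ := ε ^ 2 / 4 with hc
  have hc0 : 0 < c := by positivity
  refine ⟨max 2 ⌈30 / c ^ 3⌉₊, fun n hn H H' hH hdeg hsub hcod => ?_⟩
  have hn2 : (2 : ℝ) ≤ n := by exact_mod_cast (le_max_left _ _).trans hn
  have hn0 : (0 : ℝ) < n := by linarith
  have hnc : 30 ≤ c ^ 3 * n := by
    have : 30 / c ^ 3 ≤ n := (Nat.le_ceil _).trans (by exact_mod_cast (le_max_right _ _).trans hn)
    rwa [div_le_iff₀' (by positivity)] at this
  -- `exp u ≥ u³ / 3!` makes the exponential beat the quadratic number of weights.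
  have hcard : (Fintype.card (Bool ⊕ Fin n ⊕ (Fin n × Fin n) ⊕ (Fin n × Fin n)) : ℝ) ≤
      Real.exp (ε ^ 2 / 4 * n) := by
    have h3 := Real.pow_div_factorial_le_exp (c * n) (by positivity) 3
    have h6 : ((Nat.factorial 3 : ℕ) : ℝ) = 6 := by norm_num [Nat.factorial]
    rw [h6] at h3
    have h4 : 30 * (n : ℝ) ^ 2 ≤ c ^ 3 * n * (n : ℝ) ^ 2 :=
      mul_le_mul_of_nonneg_right hnc (by positivity)
    simp only [Fintype.card_sum, Fintype.card_bool, Fintype.card_prod, Fintype.card_fin]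
    push_cast
    nlinarith
  obtain ⟨A, hA⟩ := exists_discrepancy_le (n := n) hσ.le hσ1 hε (by linarith)
    (Sum.elim (fun b _ => if b then 1 else -1)
      (Sum.elim (fun v y => -((codegIn n H v y univ : ℝ) / n))
        (Sum.elim (fun p z => -nbrInd n H p.1 p.2 z) (fun p z => -nbrInd n H' p.1 p.2 z))))
    (by
      rintro (b | v | p | p) i
      · cases b <;> simp
      · simp only [Sum.elim_inr, Sum.elim_inl, abs_neg]
        rw [abs_of_nonneg (by positivity), div_le_one hn0]
        exact_mod_cast codegIn_le n H v i
      · simpa using abs_nbrInd_le n H p.1 p.2 i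
      · simpa using abs_nbrInd_le n H' p.1 p.2 i) hcard
  have hup := hA (Sum.inl true)
  have hlo := hA (Sum.inl false)
  have hD := fun v => hA (Sum.inr (Sum.inl v))
  have hN := fun x y => hA (Sum.inr (Sum.inr (Sum.inl (x, y))))
  have hN' := fun x y => hA (Sum.inr (Sum.inr (Sum.inr (x, y))))
  simp only [Sum.elim_inr, Sum.elim_inl, sum_neg_distrib, sum_nbrInd, ← sum_div] at hD hN hN'
  simp at hup hlo
  have hεn : ε * n ≤ σ / 2 * n := mul_le_mul_of_nonneg_right hεi hn0.le
  refine ⟨A, ⟨by linarith, by nlinarith⟩, fun v => ?_, fun x y hxy => ?_⟩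
  · have hAn : (A.card : ℝ) ≤ n := by exact_mod_cast (card_le_univ A).trans (by simp)
    have hsumA : (2 * vdegIn n H v A : ℝ) = ∑ y ∈ A, (codegIn n H v y A : ℝ) := by
      exact_mod_cast (sum_codegIn hH v A).symm
    have hsumV : ∑ y, (codegIn n H v y univ : ℝ) = 2 * vdeg n H v := by
      have := sum_codegIn hH v univ
      rw [vdegIn_univ] at this
      exact_mod_cast this
    have h1 : ∑ y ∈ A, (σ * codegIn n H v y univ - ε * n) ≤ ∑ y ∈ A, (codegIn n H v y A : ℝ) :=
      sum_le_sum fun y _ => by linarith [hN v y]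
    rw [sum_sub_distrib, ← mul_sum, sum_const, nsmul_eq_mul] at h1
    have h2 : σ * (2 * vdeg n H v) - ε * n * n ≤ ∑ y ∈ A, (codegIn n H v y univ : ℝ) := by
      have h := hD v
      rw [hsumV] at h
      have h' := mul_le_mul_of_nonneg_right h hn0.le
      have e1 : -((∑ y ∈ A, (codegIn n H v y univ : ℝ)) / n) * n =
          -∑ y ∈ A, (codegIn n H v y univ : ℝ) := by field_simp
      have e2 : (σ * -(2 * (vdeg n H v : ℝ) / n) + ε * n) * n =
          -(σ * (2 * vdeg n H v)) + ε * n * n := by field_simp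
      rw [e1, e2] at h'
      linarith
    have h3 := mul_le_mul_of_nonneg_left h2 hσ.le
    have h4 : (A.card : ℝ) * (ε * n) ≤ n * (ε * n) :=
      mul_le_mul_of_nonneg_right hAn (by positivity)
    have h5 : σ * (ε * n * n) ≤ 1 * (ε * n * n) := mul_le_mul_of_nonneg_right hσ1 (by positivity)
    have h6 : (n : ℝ) ^ 2 / 4 ≤ n.choose 2 := by
      rw [Nat.cast_choose_two]
      nlinarith
    have h7 : σ ^ 2 * (α * ((n : ℝ) ^ 2 / 4)) ≤ σ ^ 2 * vdeg n H v :=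
      mul_le_mul_of_nonneg_left ((mul_le_mul_of_nonneg_left h6 hα.le).trans (hdeg v))
        (by positivity)
    have h8 : ε * (n : ℝ) ^ 2 ≤ σ ^ 2 * α / 8 * (n : ℝ) ^ 2 :=
      mul_le_mul_of_nonneg_right hεii (by positivity)
    linarith
  · refine (hcod x y hxy).imp_left fun h => ?_
    have h1 := hN' x y
    rw [codegIn_univ (fun e he => hH e (hsub he)) hxy] at h1
    have h2 : ε * n ≤ σ * d / 6 * n := mul_le_mul_of_nonneg_right hεiii hn0.le
    have h3 := mul_le_mul_of_nonneg_left h (by positivity : 0 ≤ σ / 2)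
    linarith
end
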